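/- For every integer n ≥ 1, with R = W(n+1), one has |B_n/E_n − (1 − (e^{−R}/12)·(1 − 3/(2R) − 10/R² − 9/R³ + 1/R⁴)/(1 + 1/R)³)| ≤ 1.6·e^{−2R}. -/

import Mathlib

/-- Principal branch of the Lambert W function on `[0, ∞)`: for `x ≥ 0`,
`lambertW x` is the unique `y ≥ 0` with `y * exp y = x`. -/
noncomputable def lambertW (x : ℝ) : ℝ := Function.invFun (fun y : ℝ => y * Real.exp y) x

/-- Bell numbers: `Bell 0 = 1` and `Bell (n+1) = ∑_{k=0}^{n} C(n,k) * Bell k`. -/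
def Bell : ℕ → ℕ
  | 0 => 1
  | n + 1 => ∑ k ∈ (Finset.range (n + 1)).attach, (n.choose k.1) * Bell k.1
decreasing_by exact Finset.mem_range.mp k.2

/-- `E n = n! * exp(e^R - 1) / (R^n * sqrt(2π(n+1)(R+1)))` with `R = W(n+1)`. -/
noncomputable def E (n : ℕ) : ℝ :=
  (Nat.factorial n : ℝ) * Real.exp (Real.exp (lambertW (n + 1)) - 1) /
    ((lambertW (n + 1)) ^ n * Real.sqrt (2 * Real.pi * (n + 1) * (lambertW (n + 1) + 1)))

section PartA
open MeasureTheory Filter Topology Set Real FourierTransform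

lemma Bell_succ' (n : ℕ) : Bell (n+1) = ∑ k ∈ Finset.range (n + 1), n.choose k * Bell k := by
  rw [Bell]
  exact Finset.sum_attach (Finset.range (n+1)) (fun k => n.choose k * Bell k)

lemma dobinski (n : ℕ) : HasSum (fun k : ℕ => (k:ℝ)^n / (k.factorial : ℝ)) (Real.exp 1 * Bell n) := by
  induction n using Nat.strong_induction_on with
  | _ n ih =>
    rcases n with _ | n
    · have := NormedSpace.expSeries_div_hasSum_exp (𝔸 := ℝ) 1
      rw [← Real.exp_eq_exp_ℝ] at this
      simpa [Bell] using this
    · rw [← hasSum_nat_add_iff' 1]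
      have h1 : ∀ k : ℕ, ((k+1 : ℕ):ℝ)^(n+1) / ((k+1).factorial : ℝ)
          = ∑ j ∈ Finset.range (n+1), (n.choose j : ℝ) * ((k:ℝ)^j / (k.factorial : ℝ)) := by
        intro k
        have : (k.factorial : ℝ) ≠ 0 := by positivity
        have h2 : ((k:ℝ)+1) ≠ 0 := by positivity
        rw [Nat.factorial_succ]
        push_cast
        rw [pow_succ, mul_comm ((k:ℝ)+1) (k.factorial : ℝ), mul_div_mul_right _ _ h2, add_pow,
          Finset.sum_div]
        refine Finset.sum_congr rfl fun j _ => ?_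
        simp
        ring
      simp only [h1]
      have := hasSum_sum (f := fun j (k:ℕ) => (n.choose j : ℝ) * ((k:ℝ)^j / (k.factorial : ℝ)))
        (s := Finset.range (n+1)) (fun j hj => (ih j (Finset.mem_range.1 hj)).mul_left (n.choose j : ℝ))
      have e : Real.exp 1 * ((Bell (n+1) : ℕ) : ℝ) - ∑ i ∈ Finset.range 1, ((i:ℕ):ℝ)^(n+1) / ((i.factorial : ℕ) : ℝ)
          = ∑ i ∈ Finset.range (n+1), (n.choose i : ℝ) * (Real.exp 1 * Bell i) := by
        rw [Bell_succ']
        push_cast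
        rw [Finset.mul_sum]
        simp
        refine Finset.sum_congr rfl fun j _ => by ring
      rw [e]
      exact this

lemma integrableOn_pow_exp {R : ℝ} (hR : 0 < R) (n : ℕ) :
    IntegrableOn (fun t : ℝ => t^n * Real.exp (-(R*t))) (Ioi 0) := by
  have := integrableOn_rpow_mul_exp_neg_mul_rpow (s := n) (p := 1) (b := R)
    (by have : (0:ℝ) ≤ n := by positivity
        linarith) (by norm_num) hR
  refine this.congr_fun (fun t _ => ?_) measurableSet_Ioi
  simp

lemma laplace_pow {s : ℂ} (hs : 0 < s.re) (n : ℕ) :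
    ∫ t in Ioi (0:ℝ), (t:ℂ)^n * Complex.exp (-(s*t)) = n.factorial / s^(n+1) := by
  have hs0 : s ≠ 0 := by rintro rfl; simp at hs
  have hint : ∀ m : ℕ, IntegrableOn (fun t : ℝ => (t:ℂ)^m * Complex.exp (-(s*t))) (Ioi 0) := by
    intro m
    have := integrableOn_pow_exp hs m
    refine Integrable.mono' this ?_ ?_
    · exact (Continuous.aestronglyMeasurable (by fun_prop))
    · filter_upwards [ae_restrict_mem measurableSet_Ioi] with t ht
      have ht : (0:ℝ) < t := ht
      simp [Complex.norm_exp, abs_of_pos ht]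
  have hlim : ∀ m : ℕ, Tendsto (fun t : ℝ => (t:ℂ)^m * Complex.exp (-(s*t))) atTop (𝓝 0) := by
    intro m
    rw [tendsto_zero_iff_norm_tendsto_zero]
    have h := tendsto_rpow_mul_exp_neg_mul_atTop_nhds_zero m s.re hs
    refine h.congr' ?_
    filter_upwards [eventually_gt_atTop 0] with t ht
    simp [Complex.norm_exp, abs_of_pos ht]
  have hder : ∀ t : ℝ, HasDerivAt (fun t : ℝ => Complex.exp (-(s*t))) (-s * Complex.exp (-(s*t))) t := by
    intro t
    have h := ((((hasDerivAt_id t).ofReal_comp).const_mul s).neg).cexp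
    simp at h
    convert h using 1
    ring
  induction n with
  | zero =>
    have h := integral_Ioi_of_hasDerivAt_of_tendsto' (a := 0) (f := fun t : ℝ => -(1/s) * Complex.exp (-(s*t)))
      (f' := fun t : ℝ => (t:ℂ)^0 * Complex.exp (-(s*t))) (m := 0) (fun t _ => ?_) (hint 0) ?_
    · rw [h]; simp
    · have e : (t:ℂ)^0 * Complex.exp (-(s*t)) = -(1/s) * (-s * Complex.exp (-(s*t))) := by
        field_simp
      rw [e]
      exact (hder t).const_mul (-(1/s))
    · simpa using (hlim 0).const_mul (-(1/s))
  | succ n ih =>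
    have h := integral_Ioi_of_hasDerivAt_of_tendsto' (a := 0) (f := fun t : ℝ => (t:ℂ)^(n+1) * Complex.exp (-(s*t)))
      (f' := fun t : ℝ => ((n+1:ℕ):ℂ) * ((t:ℂ)^n * Complex.exp (-(s*t))) - s * ((t:ℂ)^(n+1) * Complex.exp (-(s*t)))) (m := 0) (fun t _ => ?_) (((hint n).const_mul _).sub ((hint (n+1)).const_mul _)) (hlim _)
    · rw [integral_sub ((hint n).const_mul _) ((hint (n+1)).const_mul _), integral_const_mul, integral_const_mul, ih] at h
      simp at h
      rw [sub_eq_zero] at h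
      rw [eq_div_iff (pow_ne_zero _ hs0), Nat.factorial_succ]
      have h2 : (s * ∫ t in Ioi (0:ℝ), (t:ℂ)^(n+1) * Complex.exp (-(s*t))) * s^(n+1) = (n+1) * n.factorial := by
        rw [← h]; field_simp
      push_cast
      rw [← h2]; ring
    · have h1 := ((hasDerivAt_id t).ofReal_comp).pow (n+1)
      have h2 := h1.mul (hder t)
      have e : ((n+1:ℕ):ℂ) * ((t:ℂ)^n * Complex.exp (-(s*t))) - s * ((t:ℂ)^(n+1) * Complex.exp (-(s*t)))
          = ((n+1:ℕ):ℂ) * ((id t : ℝ):ℂ)^(n+1-1) * ((1:ℝ):ℂ) * Complex.exp (-(s*t))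
            + ((fun y : ℝ => ((id y : ℝ) : ℂ))^(n+1)) t * (-s * Complex.exp (-(s*t))) := by
        simp
        ring
      rw [e]
      exact h2

lemma integrable_inv_pow {R : ℝ} (hR : 0 < R) {n : ℕ} (hn : 1 ≤ n) :
    Integrable (fun y : ℝ => ((R:ℂ) + y * Complex.I)⁻¹^(n+1)) := by
  have h0 : Integrable (fun y : ℝ => (R⁻¹)^(n+1) * (1 + (R⁻¹ * y)^2)⁻¹) :=
    ((integrable_inv_one_add_sq).comp_mul_left' (inv_ne_zero hR.ne')).const_mul _
  refine h0.mono' ?_ ?_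
  · refine Continuous.aestronglyMeasurable ?_
    refine (Continuous.inv₀ (by fun_prop) ?_).pow _
    intro x h
    have := congrArg Complex.re h
    simp at this
    exact hR.ne' this
  · refine Eventually.of_forall fun y => ?_
    obtain ⟨m, rfl⟩ := Nat.exists_eq_add_of_le hn
    have hsq : ‖(R:ℂ) + y * Complex.I‖^2 = R^2 + y^2 := by
      rw [← Complex.normSq_eq_norm_sq, Complex.normSq_add_mul_I]
    have hge : R ≤ ‖(R:ℂ) + y * Complex.I‖ := by
      have := Complex.re_le_norm ((R:ℂ) + y * Complex.I)
      simpa using this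
    rw [norm_pow, norm_inv]
    have e1 : (‖(R:ℂ) + y * Complex.I‖⁻¹)^(1+m+1) = (‖(R:ℂ) + y * Complex.I‖⁻¹)^m * (R^2+y^2)⁻¹ := by
      rw [← hsq]; ring
    have e2 : (R⁻¹)^(1+m+1) * (1 + (R⁻¹ * y)^2)⁻¹ = (R⁻¹)^m * (R^2+y^2)⁻¹ := by
      have : R^2 + y^2 ≠ 0 := by positivity
      have h3 : R^2 + y^2 = R^2 * (1 + (R⁻¹ * y)^2) := by field_simp
      rw [h3]
      rw [mul_inv]
      ring
    rw [e1, e2]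
    gcongr

lemma inversion {R : ℝ} (hR : 0 < R) {n : ℕ} (hn : 1 ≤ n) (v : ℝ) :
    ∫ y : ℝ, Complex.exp (v * (y * Complex.I)) * ((R:ℂ) + y * Complex.I)⁻¹^(n+1)
      = 2 * π / n.factorial * (((max v 0)^n * Real.exp (-(R*v)) : ℝ) : ℂ) := by
  set f : ℝ → ℂ := fun t => (((max t 0)^n * Real.exp (-(R*t)) : ℝ) : ℂ) with hf
  have hcont : Continuous f := by fun_prop
  have hind : f = (Ioi (0:ℝ)).indicator (fun t : ℝ => ((t^n * Real.exp (-(R*t)) : ℝ) : ℂ)) := by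
    ext t
    by_cases ht : 0 < t
    · simp [hf, ht, max_eq_left ht.le]
    · have : t ≤ 0 := not_lt.1 ht
      have hn0 : n ≠ 0 := by omega
      simp [hf, ht, max_eq_right this, hn0]
  have hfi : Integrable f := by
    rw [hind, integrable_indicator_iff measurableSet_Ioi]
    exact (integrableOn_pow_exp hR n).ofReal
  have hF : ∀ w : ℝ, 𝓕 f w = n.factorial * ((R:ℂ) + ((2*π*w : ℝ):ℂ) * Complex.I)⁻¹^(n+1) := by
    intro w
    have hs : 0 < ((R:ℂ) + ((2*π*w : ℝ):ℂ) * Complex.I).re := by simpa using hR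
    rw [inv_pow, ← div_eq_mul_inv, ← laplace_pow hs, Real.fourier_real_eq_integral_exp_smul, hind]
    rw [← integral_indicator measurableSet_Ioi]
    congr 1
    ext t
    by_cases ht : 0 < t
    · simp only [mem_Ioi, ht, indicator_of_mem, smul_eq_mul]
      push_cast
      rw [mul_left_comm, ← Complex.exp_add]
      congr 2
      ring
    · simp [ht]
  have hFi : Integrable (𝓕 f) := by
    have : 𝓕 f = fun w : ℝ => n.factorial * ((R:ℂ) + ((2*π*w : ℝ):ℂ) * Complex.I)⁻¹^(n+1) := funext hF
    rw [this]
    exact ((integrable_inv_pow hR hn).comp_mul_left' (R := 2*π) (by positivity)).const_mul _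
  have hinv := hfi.fourierInv_fourier_eq hFi (v := v) hcont.continuousAt
  rw [Real.fourierInv_eq'] at hinv
  simp only [hF] at hinv
  have h2 := Measure.integral_comp_mul_left (fun y : ℝ => Complex.exp (v * (y * Complex.I)) * ((R:ℂ) + y * Complex.I)⁻¹^(n+1)) (2*π)
  have h3 : f v = n.factorial * ∫ w : ℝ, (fun y : ℝ => Complex.exp (v * (y * Complex.I)) * ((R:ℂ) + y * Complex.I)⁻¹^(n+1)) (2*π*w) := by
    rw [← hinv, ← integral_const_mul]
    congr 1
    ext w
    simp only [smul_eq_mul]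
    rw [mul_left_comm]
    congr 2
    simp
    ring_nf
  rw [h2] at h3
  have hpos : |(2*π)⁻¹| = (2*π)⁻¹ := abs_of_pos (by positivity)
  rw [hpos] at h3
  change _ = 2 * π / n.factorial * f v
  rw [h3]
  have : (n.factorial : ℂ) ≠ 0 := by exact_mod_cast Nat.factorial_ne_zero n
  have hpi : (π:ℂ) ≠ 0 := by exact_mod_cast Real.pi_ne_zero
  rw [Complex.real_smul]
  generalize (∫ (y : ℝ), Complex.exp (v * (y * Complex.I)) * ((R:ℂ) + y * Complex.I)⁻¹^(n+1)) = J
  push_cast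
  field_simp

lemma bell_integral {R : ℝ} (hR : 0 < R) {n : ℕ} (hn : 1 ≤ n) :
    ∫ y : ℝ, Complex.exp (Complex.exp (R + y * Complex.I)) * ((R:ℂ) + y * Complex.I)⁻¹^(n+1)
      = 2 * π / n.factorial * (Real.exp 1 * Bell n : ℝ) := by
  set F : ℕ → ℝ → ℂ := fun k y => (Complex.exp (k * (R + y * Complex.I)) / k.factorial) * ((R:ℂ) + y * Complex.I)⁻¹^(n+1) with hF
  have hnorm : ∀ k y, ‖F k y‖ = (Real.exp R)^k / k.factorial * ‖((R:ℂ) + y * Complex.I)⁻¹^(n+1)‖ := by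
    intro k y
    simp only [hF, norm_mul, norm_div, Complex.norm_exp]
    congr 2
    · rw [← Real.exp_nat_mul]; simp
    · simp
  have hi := integrable_inv_pow hR hn
  have hFi : ∀ k, Integrable (F k) := by
    intro k
    have hg : Integrable (fun y : ℝ => (Real.exp R)^k / k.factorial * ‖((R:ℂ) + y * Complex.I)⁻¹^(n+1)‖) := hi.norm.const_mul _
    refine hg.mono' ?_ (Eventually.of_forall fun y => (hnorm k y).le)
    exact (Continuous.aestronglyMeasurable (by fun_prop)).mul hi.1
  have hsum : Summable fun k => ∫ y, ‖F k y‖ := by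
    simp only [hnorm, integral_const_mul]
    exact (Real.summable_pow_div_factorial _).mul_right _
  have h := hasSum_integral_of_summable_integral_norm hFi hsum
  have hval : ∀ k : ℕ, ∫ y, F k y = ((2 * π / n.factorial * ((k:ℝ)^n / k.factorial) : ℝ) : ℂ) := by
    intro k
    have : ∀ y : ℝ, F k y = (Complex.exp (k * R) / k.factorial) * (Complex.exp ((k:ℝ) * (y * Complex.I)) * ((R:ℂ) + y * Complex.I)⁻¹^(n+1)) := by
      intro y
      simp only [hF]
      rw [mul_add, Complex.exp_add]
      push_cast
      ring
    simp only [this]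
    rw [integral_const_mul, inversion hR hn]
    have hk : (0:ℝ) ≤ k := by positivity
    rw [max_eq_left hk]
    push_cast
    have : Complex.exp (k * R) * Complex.exp (-(R * k)) = 1 := by
      rw [← Complex.exp_add]; simp [mul_comm]
    linear_combination (2 * π / n.factorial * (k:ℂ)^n / k.factorial) * this
  simp only [hval] at h
  have h4 : HasSum (fun k : ℕ => ((2 * π / n.factorial * ((k:ℝ)^n / k.factorial) : ℝ) : ℂ)) ((2 * π / n.factorial * (Real.exp 1 * Bell n) : ℝ) : ℂ) := by
    rw [Complex.hasSum_ofReal]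
    exact (dobinski n).mul_left _
  have h5 := h.unique h4
  have h6 : ∀ y : ℝ, ∑' k, F k y = Complex.exp (Complex.exp (R + y * Complex.I)) * ((R:ℂ) + y * Complex.I)⁻¹^(n+1) := by
    intro y
    simp only [hF]
    rw [tsum_mul_right]
    congr 1
    have e := (NormedSpace.expSeries_div_hasSum_exp (𝔸 := ℂ) (Complex.exp (R + y * Complex.I))).tsum_eq
    rw [← Complex.exp_eq_exp_ℂ] at e
    rw [← e]
    refine tsum_congr fun k => ?_
    rw [← Complex.exp_nat_mul]
  simp only [h6] at h5
  rw [h5]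
  push_cast
  ring

end PartA

section PartB
open MeasureTheory Filter Topology Set Real

noncomputable def AA (R y : ℝ) : ℝ := (Real.cos y - 1 + y^2/2) + R/2 * ((y/R)^2 - Real.log (1 + (y/R)^2))
noncomputable def BB (R y : ℝ) : ℝ := Real.sin y - R * Real.arctan (y/R)

lemma polar_aux (x : ℝ) : (1:ℂ) + x * Complex.I
    = Complex.exp ((1/2 * Real.log (1 + x^2) : ℝ) + (Real.arctan x : ℝ) * Complex.I) := by
  have hp : 0 < 1 + x^2 := by positivity
  have h1 : Real.exp (1/2 * Real.log (1 + x^2)) = Real.sqrt (1 + x^2) := by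
    rw [Real.sqrt_eq_rpow, Real.rpow_def_of_pos hp, mul_comm]
  have hs : Real.sqrt (1 + x^2) ≠ 0 := (Real.sqrt_pos.2 hp).ne'
  rw [Complex.exp_add, ← Complex.ofReal_exp, h1, Complex.exp_mul_I, ← Complex.ofReal_cos,
    ← Complex.ofReal_sin, Real.cos_arctan, Real.sin_arctan]
  have hs' : ((Real.sqrt (1 + x^2) : ℝ) : ℂ) ≠ 0 := by exact_mod_cast hs
  push_cast
  field_simp

lemma re_integrand {R : ℝ} (hR : 0 < R) {N : ℕ} (hN : Real.exp R * R = N) (y : ℝ) :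
    (Complex.exp (Complex.exp (R + y * Complex.I)) * ((R:ℂ) + y * Complex.I)⁻¹^N).re
    = Real.exp (Real.exp R) * (R⁻¹)^N *
      (Real.exp (-(Real.exp R * (1 + 1/R) * y^2/2)) * (Real.exp (Real.exp R * AA R y) * Real.cos (Real.exp R * BB R y))) := by
  have hRc : (R:ℂ) ≠ 0 := by exact_mod_cast hR.ne'
  have h1 : (R:ℂ) + y * Complex.I = R * Complex.exp ((1/2 * Real.log (1 + (y/R)^2) : ℝ) + (Real.arctan (y/R) : ℝ) * Complex.I) := by
    rw [← polar_aux]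
    push_cast
    field_simp
  have h2 : ((R:ℂ) + y * Complex.I)⁻¹^N = ((R⁻¹^N : ℝ) : ℂ) * Complex.exp (-(N * ((1/2 * Real.log (1 + (y/R)^2) : ℝ) + (Real.arctan (y/R) : ℝ) * Complex.I))) := by
    rw [h1, mul_inv, mul_pow, ← Complex.exp_neg, ← Complex.exp_nat_mul]
    push_cast
    ring_nf
  have h3 : Complex.exp (R + y * Complex.I) = (Real.exp R * Real.cos y : ℝ) + (Real.exp R * Real.sin y : ℝ) * Complex.I := by
    rw [Complex.exp_add, Complex.exp_mul_I]
    push_cast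
    ring
  rw [h2, h3, mul_left_comm, ← Complex.exp_add, Complex.re_ofReal_mul, Complex.exp_re]
  have hNr : ((N:ℕ):ℂ) = ((Real.exp R * R : ℝ) : ℂ) := by rw [hN]; simp
  rw [hNr]
  have e1 : ((((Real.exp R * Real.cos y : ℝ):ℂ) + (Real.exp R * Real.sin y : ℝ) * Complex.I) + -(((Real.exp R * R : ℝ) : ℂ) * ((1/2 * Real.log (1 + (y/R)^2) : ℝ) + (Real.arctan (y/R) : ℝ) * Complex.I)))
      = ((Real.exp R + -(Real.exp R * (1 + 1/R) * y^2/2) + Real.exp R * AA R y : ℝ) : ℂ) + ((Real.exp R * BB R y : ℝ) : ℂ) * Complex.I := by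
    have e2 : Real.exp R + -(Real.exp R * (1 + 1/R) * y^2/2) + Real.exp R * AA R y = Real.exp R * Real.cos y - Real.exp R * R * (1/2 * Real.log (1 + (y/R)^2)) := by
      unfold AA
      field_simp
      ring
    rw [e2]
    unfold BB
    push_cast
    ring
  rw [e1]
  simp only [Complex.add_re, Complex.ofReal_re, Complex.re_ofReal_mul, Complex.I_re, mul_zero, add_zero, Complex.add_im, Complex.ofReal_im, Complex.im_ofReal_mul, Complex.I_im, mul_one, zero_add]
  rw [Real.exp_add, Real.exp_add]
  ring

lemma bell_rep {R : ℝ} (hR : 0 < R) {n : ℕ} (hn : 1 ≤ n) (hN : Real.exp R * R = n + 1)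
    (hW : R = lambertW (n+1)) :
    Integrable (fun y : ℝ => Real.exp (-(Real.exp R * (1 + 1/R) * y^2/2)) * (Real.exp (Real.exp R * AA R y) * Real.cos (Real.exp R * BB R y))) ∧
    (Bell n : ℝ) / E n = Real.sqrt (Real.exp R * (1 + 1/R) / (2*π)) *
      ∫ y : ℝ, Real.exp (-(Real.exp R * (1 + 1/R) * y^2/2)) * (Real.exp (Real.exp R * AA R y) * Real.cos (Real.exp R * BB R y)) := by
  have hN' : Real.exp R * R = ((n+1 : ℕ) : ℝ) := by rw [hN]; push_cast; ring
  have hint : Integrable (fun y : ℝ => Complex.exp (Complex.exp (R + y * Complex.I)) * ((R:ℂ) + y * Complex.I)⁻¹^(n+1)) := by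
    have hi := integrable_inv_pow hR hn
    refine (hi.norm.const_mul (Real.exp (Real.exp R))).mono' ?_ (Eventually.of_forall fun y => ?_)
    · exact (Continuous.aestronglyMeasurable (by fun_prop)).mul hi.1
    · rw [norm_mul, Complex.norm_exp]
      gcongr
      refine (Complex.re_le_norm _).trans ?_
      rw [Complex.norm_exp]
      simp
  have hre := hint.re
  have hre2 : ∀ y : ℝ, RCLike.re (Complex.exp (Complex.exp (R + y * Complex.I)) * ((R:ℂ) + y * Complex.I)⁻¹^(n+1)) = _ := fun y => re_integrand hR hN' y
  simp only [hre2] at hre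
  have hc : Real.exp (Real.exp R) * (R⁻¹)^(n+1) ≠ 0 := by positivity
  have hI := (integrable_const_mul_iff (IsUnit.mk0 _ hc) _).1 hre
  refine ⟨hI, ?_⟩
  have h1 := bell_integral hR hn
  have h2 := integral_re hint
  rw [h1] at h2
  simp only [hre2] at h2
  rw [integral_const_mul] at h2
  set J := ∫ y : ℝ, Real.exp (-(Real.exp R * (1 + 1/R) * y^2/2)) * (Real.exp (Real.exp R * AA R y) * Real.cos (Real.exp R * BB R y)) with hJ
  have h3 : RCLike.re ((2:ℂ) * π / n.factorial * (Real.exp 1 * Bell n : ℝ)) = 2 * π / n.factorial * (Real.exp 1 * Bell n) := by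
    have : (2:ℂ) * π / n.factorial * (Real.exp 1 * Bell n : ℝ) = ((2 * π / n.factorial * (Real.exp 1 * Bell n) : ℝ) : ℂ) := by push_cast; ring
    rw [this]; rfl
  rw [h3] at h2
  unfold E
  rw [← hW]
  have hsq : Real.sqrt (2 * π * (n + 1) * (R + 1)) = (2 * π * R) * Real.sqrt (Real.exp R * (1 + 1/R) / (2*π)) := by
    rw [← hN]
    have : 2 * π * (Real.exp R * R) * (R + 1) = (2 * π * R)^2 * (Real.exp R * (1 + 1/R) / (2*π)) := by
      field_simp
    rw [this, Real.sqrt_mul (by positivity), Real.sqrt_sq (by positivity)]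
  rw [hsq]
  have hf : (n.factorial : ℝ) ≠ 0 := by positivity
  have hs : Real.sqrt (Real.exp R * (1 + 1/R) / (2*π)) ≠ 0 := by positivity
  have hB : (Bell n : ℝ) = n.factorial * (Real.exp (Real.exp R) * (R⁻¹)^(n+1) * J) / (2 * π * Real.exp 1) := by
    rw [h2]
    field_simp
  rw [hB, Real.exp_sub]
  rw [inv_pow, pow_succ]
  field_simp

lemma integrable_pow_gauss {b : ℝ} (hb : 0 < b) (m : ℕ) :
    Integrable (fun y : ℝ => y^m * Real.exp (-(b * y^2/2))) := by
  have := integrable_rpow_mul_exp_neg_mul_sq (b := b/2) (by positivity) (s := m)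
    (by have : (0:ℝ) ≤ m := by positivity
        linarith)
  refine this.congr (Eventually.of_forall fun y => ?_)
  simp
  left
  ring

lemma gauss_rec {b : ℝ} (hb : 0 < b) (m : ℕ) :
    b * ∫ y : ℝ, y^(m+2) * Real.exp (-(b * y^2/2)) = (m+1) * ∫ y : ℝ, y^m * Real.exp (-(b * y^2/2)) := by
  have h := integral_eq_zero_of_hasDerivAt_of_integrable
    (f := fun y : ℝ => y^(m+1) * Real.exp (-(b * y^2/2)))
    (f' := fun y : ℝ => (m+1) * (y^m * Real.exp (-(b * y^2/2))) - b * (y^(m+2) * Real.exp (-(b * y^2/2))))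
    (fun y => ?_) (((integrable_pow_gauss hb m).const_mul _).sub ((integrable_pow_gauss hb (m+2)).const_mul _)) (integrable_pow_gauss hb (m+1))
  · rw [integral_sub ((integrable_pow_gauss hb m).const_mul _) ((integrable_pow_gauss hb (m+2)).const_mul _), integral_const_mul, integral_const_mul] at h
    linarith
  · have h1 : HasDerivAt (fun y : ℝ => y^(m+1)) (((m+1:ℕ):ℝ) * y^m) y := by
      simpa using hasDerivAt_pow (m+1) y
    have h2 : HasDerivAt (fun y : ℝ => Real.exp (-(b * y^2/2))) (Real.exp (-(b * y^2/2)) * (-(b * (2 * y)/2))) y := by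
      have := (((hasDerivAt_pow 2 y).const_mul b).div_const 2).neg.exp
      simpa using this
    have e : (m+1) * (y^m * Real.exp (-(b * y^2/2))) - b * (y^(m+2) * Real.exp (-(b * y^2/2))) = (((m+1:ℕ):ℝ) * y^m) * Real.exp (-(b * y^2/2)) + y^(m+1) * (Real.exp (-(b * y^2/2)) * (-(b * (2 * y)/2))) := by
      push_cast; ring
    rw [e]
    exact h1.mul h2

lemma gauss0 {b : ℝ} (hb : 0 < b) : Real.sqrt (b/(2*π)) * ∫ y : ℝ, y^0 * Real.exp (-(b * y^2/2)) = 1 := by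
  have h := integral_gaussian (b/2)
  have e : (∫ y : ℝ, y^0 * Real.exp (-(b * y^2/2))) = Real.sqrt (π/(b/2)) := by
    rw [← h]
    congr 1
    ext y
    rw [pow_zero, one_mul]
    ring_nf
  rw [e, ← Real.sqrt_mul (by positivity)]
  have : b/(2*π) * (π/(b/2)) = 1 := by
    field_simp
  rw [this, Real.sqrt_one]

lemma gmom_step {b : ℝ} (hb : 0 < b) (m : ℕ) {v : ℝ} (h : Real.sqrt (b/(2*π)) * ∫ y : ℝ, y^m * Real.exp (-(b * y^2/2)) = v) :
    Real.sqrt (b/(2*π)) * ∫ y : ℝ, y^(m+2) * Real.exp (-(b * y^2/2)) = (m+1) * v / b := by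
  have := gauss_rec hb m
  rw [eq_div_iff hb.ne', ← h]
  linear_combination Real.sqrt (b/(2*π)) * this

lemma gmoms {b : ℝ} (hb : 0 < b) :
   Real.sqrt (b/(2*π)) * (∫ y : ℝ, y^4 * Real.exp (-(b * y^2/2))) = 3/b^2 ∧
   Real.sqrt (b/(2*π)) * (∫ y : ℝ, y^6 * Real.exp (-(b * y^2/2))) = 15/b^3 ∧
   Real.sqrt (b/(2*π)) * (∫ y : ℝ, y^8 * Real.exp (-(b * y^2/2))) = 105/b^4 ∧
   Real.sqrt (b/(2*π)) * (∫ y : ℝ, y^10 * Real.exp (-(b * y^2/2))) = 945/b^5 ∧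
   Real.sqrt (b/(2*π)) * (∫ y : ℝ, y^12 * Real.exp (-(b * y^2/2))) = 10395/b^6 := by
  have h0 := gauss0 hb
  have h2 := gmom_step hb 0 h0
  have h4 := gmom_step hb 2 h2
  have h6 := gmom_step hb 4 h4
  have h8 := gmom_step hb 6 h6
  have h10 := gmom_step hb 8 h8
  have h12 := gmom_step hb 10 h10
  norm_num at h4 h6 h8 h10 h12
  rw [h4, h6, h8, h10, h12]
  refine ⟨?_, ?_, ?_, ?_, ?_⟩ <;> field_simp <;> norm_num

end PartB

section PartC
open MeasureTheory Filter Topology Set Real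

lemma nonneg_of_deriv {f f' : ℝ → ℝ} (h0 : f 0 = 0) (hd : ∀ x, 0 ≤ x → HasDerivAt f (f' x) x)
    (hf' : ∀ x, 0 ≤ x → 0 ≤ f' x) : ∀ x, 0 ≤ x → 0 ≤ f x := by
  intro x hx
  have hm : MonotoneOn f (Ici 0) := by
    refine monotoneOn_of_hasDerivWithinAt_nonneg (convex_Ici 0) (f' := f') ?_ ?_ ?_
    · exact fun y hy => (hd y hy).continuousAt.continuousWithinAt
    · intro y hy
      exact (hd y (interior_subset hy)).hasDerivWithinAt
    · intro y hy
      exact hf' y (interior_subset hy)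
  have := hm (mem_Ici.2 le_rfl) (mem_Ici.2 hx) hx
  rwa [h0] at this

lemma cos_up0 : ∀ y : ℝ, 0 ≤ y → 0 ≤ 1 - y^2/2 + y^4/24 - Real.cos y := by
  refine nonneg_of_deriv (f' := fun y => -y + y^3/6 + Real.sin y) (by simp) ?_ ?_
  · intro x _
    have := ((((hasDerivAt_const x (1:ℝ)).sub ((hasDerivAt_pow 2 x).div_const 2)).add ((hasDerivAt_pow 4 x).div_const 24)).sub (hasDerivAt_cos x))
    refine HasDerivAt.congr_deriv this ?_
    simp <;> ring
  · intro x hx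
    have := Real.sin_ge_sub_cube hx
    linarith

lemma sin_up {y : ℝ} (hy : 0 ≤ y) : Real.sin y ≤ y - y^3/6 + y^5/120 := by
  have : ∀ y : ℝ, 0 ≤ y → 0 ≤ y - y^3/6 + y^5/120 - Real.sin y := by
    refine nonneg_of_deriv (f' := fun y => 1 - y^2/2 + y^4/24 - Real.cos y) (by simp) ?_ cos_up0
    intro x _
    have := ((((hasDerivAt_id x).sub ((hasDerivAt_pow 3 x).div_const 6)).add ((hasDerivAt_pow 5 x).div_const 120)).sub (hasDerivAt_sin x))
    refine HasDerivAt.congr_deriv this ?_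
    simp <;> ring
  linarith [this y hy]

lemma cos_lo0 : ∀ y : ℝ, 0 ≤ y → 0 ≤ Real.cos y - (1 - y^2/2 + y^4/24 - y^6/720) := by
  refine nonneg_of_deriv (f' := fun y => -Real.sin y - (-y + y^3/6 - y^5/120)) (by simp) ?_ ?_
  · intro x _
    have := (hasDerivAt_cos x).sub ((((hasDerivAt_const x (1:ℝ)).sub ((hasDerivAt_pow 2 x).div_const 2)).add ((hasDerivAt_pow 4 x).div_const 24)).sub ((hasDerivAt_pow 6 x).div_const 720))
    refine HasDerivAt.congr_deriv this ?_
    simp <;> ring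
  · intro x hx
    have := sin_up hx
    linarith

lemma cos_up (y : ℝ) : Real.cos y ≤ 1 - y^2/2 + y^4/24 := by
  have := cos_up0 |y| (abs_nonneg y)
  rw [Real.cos_abs, sq_abs, Even.pow_abs (by decide)] at this
  linarith

lemma cos_lo (y : ℝ) : 1 - y^2/2 + y^4/24 - y^6/720 ≤ Real.cos y := by
  have := cos_lo0 |y| (abs_nonneg y)
  rw [Real.cos_abs, sq_abs, Even.pow_abs (by decide), Even.pow_abs (by decide)] at this
  linarith

lemma arctan_lo {t : ℝ} (ht : 0 ≤ t) : t - t^3/3 ≤ Real.arctan t := by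
  have : ∀ y : ℝ, 0 ≤ y → 0 ≤ Real.arctan y - (y - y^3/3) := by
    refine nonneg_of_deriv (f' := fun y => 1/(1+y^2) - (1 - y^2)) (by simp) ?_ ?_
    · intro x _
      have := (Real.hasDerivAt_arctan x).sub ((hasDerivAt_id x).sub ((hasDerivAt_pow 3 x).div_const 3))
      refine HasDerivAt.congr_deriv this ?_
      simp <;> ring
    · intro x hx
      have : 1/(1+x^2) - (1 - x^2) = x^4/(1+x^2) := by field_simp; ring
      rw [this]; positivity
  linarith [this t ht]

lemma arctan_up {t : ℝ} (ht : 0 ≤ t) : Real.arctan t ≤ t - t^3/3 + t^5/5 := by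
  have : ∀ y : ℝ, 0 ≤ y → 0 ≤ (y - y^3/3 + y^5/5) - Real.arctan y := by
    refine nonneg_of_deriv (f' := fun y => (1 - y^2 + y^4) - 1/(1+y^2)) (by simp) ?_ ?_
    · intro x _
      have := (((hasDerivAt_id x).sub ((hasDerivAt_pow 3 x).div_const 3)).add ((hasDerivAt_pow 5 x).div_const 5)).sub (Real.hasDerivAt_arctan x)
      refine HasDerivAt.congr_deriv this ?_
      simp <;> ring
    · intro x hx
      have : (1 - x^2 + x^4) - 1/(1+x^2) = x^6/(1+x^2) := by field_simp; ring
      rw [this]; positivity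
  linarith [this t ht]

lemma arctan_up1 {t : ℝ} (ht : 0 ≤ t) : Real.arctan t ≤ t := by
  have : ∀ y : ℝ, 0 ≤ y → 0 ≤ y - Real.arctan y := by
    refine nonneg_of_deriv (f' := fun y => 1 - 1/(1+y^2)) (by simp) ?_ ?_
    · intro x _
      exact (hasDerivAt_id x).sub (Real.hasDerivAt_arctan x)
    · intro x hx
      have : 1 - 1/(1+x^2) = x^2/(1+x^2) := by field_simp; ring
      rw [this]; positivity
  linarith [this t ht]

lemma log_lo {t : ℝ} (ht : 0 ≤ t) : t - t^2/2 ≤ Real.log (1+t) := by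
  have : ∀ y : ℝ, 0 ≤ y → 0 ≤ Real.log (1+y) - (y - y^2/2) := by
    refine nonneg_of_deriv (f' := fun y => 1/(1+y) - (1 - y)) (by simp) ?_ ?_
    · intro x hx
      have := (((hasDerivAt_id x).const_add 1).log (by simp; positivity)).sub ((hasDerivAt_id x).sub ((hasDerivAt_pow 2 x).div_const 2))
      refine HasDerivAt.congr_deriv this ?_
      simp <;> ring
    · intro x hx
      have : 1/(1+x) - (1 - x) = x^2/(1+x) := by field_simp; ring
      rw [this]; positivity
  linarith [this t ht]

lemma log_up {t : ℝ} (ht : 0 ≤ t) : Real.log (1+t) ≤ t - t^2/2 + t^3/3 := by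
  have : ∀ y : ℝ, 0 ≤ y → 0 ≤ (y - y^2/2 + y^3/3) - Real.log (1+y) := by
    refine nonneg_of_deriv (f' := fun y => (1 - y + y^2) - 1/(1+y)) (by simp) ?_ ?_
    · intro x hx
      have := (((hasDerivAt_id x).sub ((hasDerivAt_pow 2 x).div_const 2)).add ((hasDerivAt_pow 3 x).div_const 3)).sub (((hasDerivAt_id x).const_add 1).log (by simp; positivity))
      refine HasDerivAt.congr_deriv this ?_
      simp <;> ring
    · intro x hx
      have : (1 - x + x^2) - 1/(1+x) = x^3/(1+x) := by field_simp; ring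
      rw [this]; positivity
  linarith [this t ht]

lemma AA_nonneg {R : ℝ} (hR : 0 < R) (y : ℝ) : 0 ≤ AA R y := by
  unfold AA
  have h1 := Real.one_sub_sq_div_two_le_cos (x := y)
  have h2 := Real.log_le_sub_one_of_pos (x := 1 + (y/R)^2) (by positivity)
  have h3 : 0 ≤ R/2 * ((y/R)^2 - Real.log (1 + (y/R)^2)) := mul_nonneg (by positivity) (by linarith)
  linarith

lemma AA_le {R : ℝ} (hR : 0 < R) (y : ℝ) : AA R y ≤ (1/24 + (1/R)^3/4) * y^4 := by
  unfold AA
  have h1 := cos_up y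
  have h2 := log_lo (t := (y/R)^2) (by positivity)
  have h3 : R/2 * ((y/R)^2 - Real.log (1 + (y/R)^2)) ≤ R/2 * (((y/R)^2)^2/2) := by
    gcongr; linarith
  have h4 : R/2 * (((y/R)^2)^2/2) = (1/R)^3/4 * y^4 := by field_simp; ring
  linarith

lemma AA_ge {R : ℝ} (hR : 0 < R) (y : ℝ) :
    (1/24 + (1/R)^3/4) * y^4 - (1/720 + (1/R)^5/6) * y^6 ≤ AA R y := by
  unfold AA
  have h1 := cos_lo y
  have h2 := log_up (t := (y/R)^2) (by positivity)
  have h3 : R/2 * (((y/R)^2)^2/2 - ((y/R)^2)^3/3) ≤ R/2 * ((y/R)^2 - Real.log (1 + (y/R)^2)) := by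
    refine mul_le_mul_of_nonneg_left ?_ (by positivity)
    linarith
  have h4 : R/2 * (((y/R)^2)^2/2 - ((y/R)^2)^3/3) = (1/R)^3/4 * y^4 - (1/R)^5/6 * y^6 := by field_simp; ring
  linarith

lemma BB_neg (R y : ℝ) : BB R (-y) = - BB R y := by
  unfold BB
  rw [Real.sin_neg, neg_div, Real.arctan_neg]; ring

lemma BB_sq_abs (R y : ℝ) : (BB R y)^2 = (BB R |y|)^2 := by
  rcases abs_cases y with ⟨h, _⟩ | ⟨h, _⟩ <;> rw [h]
  rw [BB_neg]; ring

lemma BB_bound0 {R : ℝ} (hR : 11/5 ≤ R) {y : ℝ} (hy : 0 ≤ y) :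
    |BB R y| ≤ y^3/6 ∧ |BB R y + (1/6 - (1/R)^2/3) * y^3| ≤ y^5/100 := by
  have hR0 : 0 < R := by linarith
  have hu : 1/R ≤ 5/11 := by
    rw [div_le_div_iff₀ hR0 (by norm_num)]; linarith
  have hu0 : 0 < 1/R := by positivity
  unfold BB
  have hyR : 0 ≤ y/R := by positivity
  have s1 := Real.sin_ge_sub_cube hy
  have s2 := sin_up hy
  have s3 := Real.sin_le hy
  have a1 : R * (y/R - (y/R)^3/3) ≤ R * Real.arctan (y/R) := by
    gcongr; exact arctan_lo hyR
  have a2 : R * Real.arctan (y/R) ≤ R * (y/R - (y/R)^3/3 + (y/R)^5/5) := by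
    gcongr; exact arctan_up hyR
  have a3 : R * Real.arctan (y/R) ≤ R * (y/R) := by
    gcongr; exact arctan_up1 hyR
  have e1 : R * (y/R - (y/R)^3/3) = y - (1/R)^2/3 * y^3 := by field_simp
  have e2 : R * (y/R - (y/R)^3/3 + (y/R)^5/5) = y - (1/R)^2/3 * y^3 + (1/R)^4/5 * y^5 := by field_simp
  have e3 : R * (y/R) = y := by field_simp
  rw [e1] at a1; rw [e2] at a2; rw [e3] at a3
  have p3 : 0 ≤ y^3 := by positivity
  have p5 : 0 ≤ y^5 := by positivity
  have q2 : (1/R)^2/3 * y^3 ≤ 1/6 * y^3 := by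
    refine mul_le_mul_of_nonneg_right ?_ p3
    have : (1/R)^2 ≤ (5/11)^2 := by gcongr
    linarith
  have q4 : (1/R)^4/5 * y^5 ≤ 1/100 * y^5 := by
    refine mul_le_mul_of_nonneg_right ?_ p5
    have : (1/R)^4 ≤ (5/11)^4 := by gcongr
    linarith
  constructor
  · rw [abs_le]; constructor <;> linarith
  · rw [abs_le]; constructor <;> linarith

lemma BB_bounds {R : ℝ} (hR : 11/5 ≤ R) (y : ℝ) :
    (BB R y)^2 ≤ y^6/36 ∧ |(BB R y)^2 - (1/6 - (1/R)^2/3)^2 * y^6| ≤ y^8/300 := by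
  have hR0 : 0 < R := by linarith
  have hu : 1/R ≤ 5/11 := by
    rw [div_le_div_iff₀ hR0 (by norm_num)]; linarith
  have hu0 : 0 < 1/R := by positivity
  have hu2 : (1/R)^2 ≤ (5/11)^2 := by gcongr
  have hu2' : 0 < (1/R)^2 := by positivity
  rw [BB_sq_abs]
  have e6 : y^6 = |y|^6 := (Even.pow_abs (by decide) y).symm
  have e8 : y^8 = |y|^8 := (Even.pow_abs (by decide) y).symm
  rw [e6, e8]
  have hz : 0 ≤ |y| := abs_nonneg y
  generalize |y| = z at *
  obtain ⟨h1, h2⟩ := BB_bound0 hR hz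
  set c := 1/6 - (1/R)^2/3 with hc
  have hcb : |c| ≤ 1/6 := by rw [abs_le]; constructor <;> linarith
  have p3 : 0 ≤ z^3 := by positivity
  constructor
  · have := pow_le_pow_left₀ (abs_nonneg _) h1 2
    rw [sq_abs] at this
    nlinarith
  · have h3 : |BB R z - c * z^3| ≤ z^3/3 := by
      have : |c * z^3| ≤ z^3/6 := by
        rw [abs_mul, abs_of_nonneg p3]
        nlinarith
      have := abs_sub (BB R z) (c*z^3)
      linarith
    have e : (BB R z)^2 - c^2 * z^6 = (BB R z + c*z^3) * (BB R z - c*z^3) := by ring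
    rw [e, abs_mul]
    have := mul_le_mul h2 h3 (abs_nonneg _) (by positivity)
    calc _ ≤ _ := this
      _ = z^8/300 := by ring

end PartC

section PartD
open MeasureTheory Filter Topology Set Real

lemma exp_quad {s : ℝ} (hs : 0 ≤ s) : Real.exp s - 1 - s ≤ s^2/2 * Real.exp s := by
  have : ∀ s : ℝ, 0 ≤ s → 0 ≤ s^2/2 * Real.exp s - (Real.exp s - 1 - s) := by
    refine nonneg_of_deriv (f' := fun s => s^2/2 * Real.exp s + (1 - (1 - s) * Real.exp s)) (by simp) ?_ ?_
    · intro x _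
      have := (((hasDerivAt_pow 2 x).div_const 2).mul (Real.hasDerivAt_exp x)).sub (((Real.hasDerivAt_exp x).sub_const 1).sub (hasDerivAt_id x))
      refine HasDerivAt.congr_deriv this ?_
      simp
      ring
    · intro x hx
      have h1 := Real.add_one_le_exp (-x)
      have h2 : Real.exp (-x) * Real.exp x = 1 := by rw [← Real.exp_add]; simp
      have h3 : (1 - x) * Real.exp x ≤ 1 := by
        rw [← h2]
        have := Real.exp_pos x
        nlinarith
      have : 0 ≤ x^2/2 * Real.exp x := by positivity
      linarith
  linarith [this s hs]

noncomputable def G1 (l R : ℝ) : ℝ := (l*R-2)/2 * (2 * (π/R)^2 / ((π/R)^2 + 2))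
noncomputable def G2 (l R : ℝ) : ℝ := 5*l/6 + (l*R-2)/2 * (2 * (2/R^2) / (2/R^2 + 2))

lemma tail_pt {l R : ℝ} (hR : 0 < R) (hl : 0 < l) (hN : 2 ≤ l*R) {y : ℝ} (hy : 2 ≤ y^2) :
    Real.exp (-(l * (1 + 1/R) * y^2/2)) * Real.exp (l * AA R y)
      ≤ (Real.exp (-G1 l R) + Real.exp (-G2 l R)) * (1 + (R⁻¹ * y)^2)⁻¹ := by
  have hx : (R⁻¹ * y)^2 = (y/R)^2 := by rw [div_eq_inv_mul]
  rw [hx]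
  have hp : 0 < 1 + (y/R)^2 := by positivity
  set P := Real.log (1 + (y/R)^2) with hP
  have hinv : (1 + (y/R)^2)⁻¹ = Real.exp (-P) := by rw [Real.exp_neg, Real.exp_log hp]
  rw [hinv, add_mul, ← Real.exp_add, ← Real.exp_add, ← Real.exp_add]
  have e : -(l * (1 + 1/R) * y^2/2) + l * AA R y = l * (Real.cos y - 1) - P - (l*R-2)/2 * P := by
    unfold AA
    rw [← hP]
    field_simp
    ring
  rw [e]
  have hN' : 0 ≤ (l*R-2)/2 := by linarith
  rcases le_total π |y| with h | h
  · have h2 : (π/R)^2 ≤ (y/R)^2 := by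
      rw [div_pow, div_pow, ← sq_abs y]
      gcongr
    have h3 : 2 * (π/R)^2 / ((π/R)^2 + 2) ≤ P :=
      (Real.le_log_one_add_of_nonneg (by positivity)).trans (Real.log_le_log (by positivity) (by linarith))
    have h4 := mul_le_mul_of_nonneg_left h3 hN'
    have h5 : l * (Real.cos y - 1) ≤ 0 := by
      have := Real.cos_le_one y
      nlinarith
    have : Real.exp (l * (Real.cos y - 1) - P - (l*R-2)/2 * P) ≤ Real.exp (-G1 l R + -P) := by
      apply Real.exp_le_exp.2
      unfold G1
      linarith
    have := Real.exp_pos (-G2 l R + -P)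
    linarith
  · have h2 : 2/R^2 ≤ (y/R)^2 := by
      rw [div_pow]
      gcongr
    have h3 : 2 * (2/R^2) / (2/R^2 + 2) ≤ P :=
      (Real.le_log_one_add_of_nonneg (by positivity)).trans (Real.log_le_log (by positivity) (by linarith))
    have h4 := mul_le_mul_of_nonneg_left h3 hN'
    have h5 : l * (Real.cos y - 1) ≤ l * (-5/6) := by
      refine mul_le_mul_of_nonneg_left ?_ hl.le
      have h6 : Real.sqrt 2 ≤ |y| := by
        rw [← Real.sqrt_sq_eq_abs]
        exact Real.sqrt_le_sqrt hy
      have h7 := Real.cos_le_cos_of_nonneg_of_le_pi (Real.sqrt_nonneg 2) h h6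
      rw [Real.cos_abs] at h7
      have h8 := cos_up (Real.sqrt 2)
      have h9 : Real.sqrt 2 ^ 2 = 2 := Real.sq_sqrt (by norm_num)
      have h10 : Real.sqrt 2 ^ 4 = 4 := by
        have : Real.sqrt 2 ^ 4 = (Real.sqrt 2 ^ 2)^2 := by ring
        rw [this, h9]; norm_num
      rw [h9, h10] at h8
      linarith
    have : Real.exp (l * (Real.cos y - 1) - P - (l*R-2)/2 * P) ≤ Real.exp (-G2 l R + -P) := by
      apply Real.exp_le_exp.2
      unfold G2
      linarith
    have := Real.exp_pos (-G1 l R + -P)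
    linarith

noncomputable def c3 (R : ℝ) : ℝ := 1/6 - (1/R)^2/3
noncomputable def c4 (R : ℝ) : ℝ := 1/24 + (1/R)^3/4
noncomputable def c6 (R : ℝ) : ℝ := 1/720 + (1/R)^5/6

lemma T1_pt {l R : ℝ} (hR : 0 < R) (hl : 0 < l) (hN : 2 ≤ l*R) (y : ℝ) :
    Real.exp (-(l * (1 + 1/R) * y^2/2)) * (Real.exp (l * AA R y) - 1 - l * AA R y)
      ≤ l^2 * (c4 R)^2/2 * (y^8 * Real.exp (-(l * (1 + 1/R - 4 * c4 R) * y^2/2)))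
       + (Real.exp (-G1 l R) + Real.exp (-G2 l R)) * (1 + (R⁻¹ * y)^2)⁻¹ := by
  have hA0 := AA_nonneg hR y
  have hA1 : AA R y ≤ c4 R * y^4 := AA_le hR y
  have hc4 : 0 < c4 R := by unfold c4; positivity
  have hs : 0 ≤ l * AA R y := by positivity
  rcases le_total 2 (y^2) with h | h
  · have h1 := tail_pt hR hl hN h
    have h2 : Real.exp (-(l * (1 + 1/R) * y^2/2)) * (Real.exp (l * AA R y) - 1 - l * AA R y) ≤ Real.exp (-(l * (1 + 1/R) * y^2/2)) * Real.exp (l * AA R y) := by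
      gcongr
      linarith
    have : 0 ≤ l^2 * (c4 R)^2/2 * (y^8 * Real.exp (-(l * (1 + 1/R - 4 * c4 R) * y^2/2))) := by positivity
    linarith
  · have h1 := exp_quad hs
    have h2 : (l * AA R y)^2 ≤ (l * (c4 R * y^4))^2 := by gcongr
    have h3 : Real.exp (-(l * (1 + 1/R) * y^2/2)) * Real.exp (l * AA R y) ≤ Real.exp (-(l * (1 + 1/R - 4 * c4 R) * y^2/2)) := by
      rw [← Real.exp_add]
      apply Real.exp_le_exp.2
      have : y^4 ≤ 2 * y^2 := by nlinarith [sq_nonneg y]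
      have h4 : l * AA R y ≤ l * (c4 R * (2 * y^2)) := by
        refine mul_le_mul_of_nonneg_left (hA1.trans ?_) hl.le
        gcongr
      linarith
    have h5 : 0 ≤ (Real.exp (-G1 l R) + Real.exp (-G2 l R)) * (1 + (R⁻¹ * y)^2)⁻¹ := by positivity
    calc _ ≤ Real.exp (-(l * (1 + 1/R) * y^2/2)) * ((l * AA R y)^2/2 * Real.exp (l * AA R y)) := by
            gcongr
      _ = (l * AA R y)^2/2 * (Real.exp (-(l * (1 + 1/R) * y^2/2)) * Real.exp (l * AA R y)) := by ring
      _ ≤ (l * (c4 R * y^4))^2/2 * Real.exp (-(l * (1 + 1/R - 4 * c4 R) * y^2/2)) := by gcongr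
      _ = l^2 * (c4 R)^2/2 * (y^8 * Real.exp (-(l * (1 + 1/R - 4 * c4 R) * y^2/2))) := by ring
      _ ≤ _ := by linarith

lemma D_pt {l R : ℝ} (hR : 11/5 ≤ R) (hl : 0 < l) (hN : 2 ≤ l*R) (y : ℝ) :
    |Real.exp (-(l * (1 + 1/R) * y^2/2)) * (Real.exp (l * AA R y) * Real.cos (l * BB R y))
      - Real.exp (-(l * (1 + 1/R) * y^2/2)) * (1 + l * c4 R * y^4 - l^2 * (c3 R)^2/2 * y^6)|
    ≤ Real.exp (-(l * (1 + 1/R) * y^2/2)) * (l^3 * c4 R/72 * y^10 + l^4/31104 * y^12 + l * c6 R * y^6 + l^2/600 * y^8)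
     + (l^2 * (c4 R)^2/2 * (y^8 * Real.exp (-(l * (1 + 1/R - 4 * c4 R) * y^2/2)))
       + (Real.exp (-G1 l R) + Real.exp (-G2 l R)) * (1 + (R⁻¹ * y)^2)⁻¹) := by
  have hR0 : 0 < R := by linarith
  have hT1 := T1_pt hR0 hl hN y
  have hA0 := AA_nonneg hR0 y
  have hA1 : AA R y ≤ c4 R * y^4 := AA_le hR0 y
  have hA2 : c4 R * y^4 - c6 R * y^6 ≤ AA R y := AA_ge hR0 y
  have hc4 : 0 < c4 R := by unfold c4; positivity
  obtain ⟨hB1, hB2⟩ := BB_bounds hR y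
  change |(BB R y)^2 - (c3 R)^2 * y^6| ≤ y^8/300 at hB2
  set A := AA R y
  set B := BB R y
  set w := Real.exp (-(l * (1 + 1/R) * y^2/2)) with hw
  have hw0 : 0 < w := Real.exp_pos _
  set C := Real.cos (l * B) with hC
  have hC1 : C ≤ 1 := Real.cos_le_one _
  have hC2 : -1 ≤ C := Real.neg_one_le_cos _
  have hC3 : 1 - (l*B)^2/2 ≤ C := Real.one_sub_sq_div_two_le_cos
  have hC4 : C ≤ 1 - (l*B)^2/2 + (l*B)^4/24 := cos_up _
  have hs : 0 ≤ l * A := by positivity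
  have hE : 0 ≤ Real.exp (l * A) - 1 - l * A := by linarith [Real.add_one_le_exp (l*A)]
  have h1 : |(Real.exp (l * A) - 1 - l * A) * C| ≤ Real.exp (l * A) - 1 - l * A := by
    rw [abs_mul, abs_of_nonneg hE]
    have : |C| ≤ 1 := abs_le.2 ⟨hC2, hC1⟩
    nlinarith
  have h2 : |l * A * (C - 1)| ≤ l^3 * c4 R/72 * y^10 := by
    rw [abs_mul, abs_of_nonneg hs]
    have : |C - 1| ≤ l^2 * (y^6/36)/2 := by
      rw [abs_le]
      have : l^2 * B^2 ≤ l^2 * (y^6/36) := by gcongr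
      constructor
      · nlinarith
      · have : 0 ≤ l^2 * (y^6/36)/2 := by positivity
        linarith
    calc l * A * |C - 1| ≤ l * (c4 R * y^4) * (l^2 * (y^6/36)/2) := by gcongr
      _ = _ := by ring
  have h3 : |C - 1 + (l*B)^2/2| ≤ l^4/31104 * y^12 := by
    have : B^2*B^2 ≤ (y^6/36)*(y^6/36) := by gcongr
    have h' : l^4 * (B^2*B^2) ≤ l^4 * ((y^6/36)*(y^6/36)) := by gcongr
    rw [abs_le]
    constructor
    · have : 0 ≤ l^4/31104 * y^12 := by positivity
      linarith
    · nlinarith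
  have h4 : |l * (A - c4 R * y^4)| ≤ l * c6 R * y^6 := by
    rw [abs_mul, abs_of_pos hl, mul_assoc]
    gcongr
    rw [abs_le]; constructor
    · linarith
    · have : 0 ≤ c6 R * y^6 := by unfold c6; positivity
      linarith
  have h5 : |l^2/2 * (B^2 - (c3 R)^2 * y^6)| ≤ l^2/600 * y^8 := by
    rw [abs_mul, abs_of_pos (by positivity)]
    calc l^2/2 * |B^2 - (c3 R)^2 * y^6| ≤ l^2/2 * (y^8/300) := by gcongr
      _ = _ := by ring
  have e : Real.exp (l * A) * C - (1 + l * c4 R * y^4 - l^2 * (c3 R)^2/2 * y^6)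
      = (Real.exp (l * A) - 1 - l * A) * C + l * A * (C - 1) + (C - 1 + (l*B)^2/2) + l * (A - c4 R * y^4)
        - l^2/2 * (B^2 - (c3 R)^2 * y^6) := by ring
  have h6 : |Real.exp (l * A) * C - (1 + l * c4 R * y^4 - l^2 * (c3 R)^2/2 * y^6)|
      ≤ (Real.exp (l * A) - 1 - l * A) + (l^3 * c4 R/72 * y^10 + l^4/31104 * y^12 + l * c6 R * y^6 + l^2/600 * y^8) := by
    rw [e]
    rw [abs_le] at *
    constructor <;> linarith [h1.1, h1.2, h2.1, h2.2, h3.1, h3.2, h4.1, h4.2, h5.1, h5.2]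
  rw [← mul_sub, abs_mul, abs_of_pos hw0]
  calc _ ≤ w * _ := mul_le_mul_of_nonneg_left h6 hw0.le
    _ ≤ _ := by rw [mul_add]; linarith

lemma main_bound {l R : ℝ} (hR : 11/5 ≤ R) (hl : 0 < l) (hN : 2 ≤ l*R)
    (ha' : 0 < 1 + 1/R - 4 * c4 R)
    (hint : Integrable (fun y : ℝ => Real.exp (-(l * (1 + 1/R) * y^2/2)) * (Real.exp (l * AA R y) * Real.cos (l * BB R y)))) :
    |Real.sqrt (l * (1 + 1/R) / (2*π)) *
      (∫ y : ℝ, Real.exp (-(l * (1 + 1/R) * y^2/2)) * (Real.exp (l * AA R y) * Real.cos (l * BB R y)))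
      - (1 + l * c4 R * (3/(l * (1 + 1/R))^2) - l^2 * (c3 R)^2/2 * (15/(l * (1 + 1/R))^3))|
    ≤ l^3 * c4 R/72 * (945/(l * (1 + 1/R))^5) + l^4/31104 * (10395/(l * (1 + 1/R))^6)
      + l * c6 R * (15/(l * (1 + 1/R))^3) + l^2/600 * (105/(l * (1 + 1/R))^4)
      + l^2 * (c4 R)^2/2 * (Real.sqrt ((1 + 1/R)/(1 + 1/R - 4 * c4 R)) * (105/(l * (1 + 1/R - 4 * c4 R))^4))
      + (Real.exp (-G1 l R) + Real.exp (-G2 l R)) * (Real.sqrt (l * (1 + 1/R) / (2*π)) * (π * R)) := by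
  have hR0 : 0 < R := by linarith
  have hb : 0 < l * (1 + 1/R) := by positivity
  have hb' : 0 < l * (1 + 1/R - 4 * c4 R) := by positivity
  obtain ⟨m4, m6, m8, m10, m12⟩ := gmoms hb
  have m0 := gauss0 hb
  obtain ⟨-, -, m8', -, -⟩ := gmoms hb'
  set b := l * (1 + 1/R) with hbdef
  set b' := l * (1 + 1/R - 4 * c4 R) with hbdef'
  set S := Real.sqrt (b / (2*π)) with hS
  have hS0 : 0 ≤ S := Real.sqrt_nonneg _
  have I := fun m => integrable_pow_gauss hb m
  have I' := fun m => integrable_pow_gauss hb' m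
  set J := ∫ y : ℝ, Real.exp (-(b * y^2/2)) * (Real.exp (l * AA R y) * Real.cos (l * BB R y)) with hJ
  -- the main term
  have hmainI : Integrable (fun y : ℝ => Real.exp (-(b * y^2/2)) * (1 + l * c4 R * y^4 - l^2 * (c3 R)^2/2 * y^6)) := by
    have := ((I 0).add ((I 4).const_mul (l * c4 R))).sub ((I 6).const_mul (l^2 * (c3 R)^2/2))
    refine this.congr (Eventually.of_forall fun y => ?_)
    simp only [Pi.add_apply, Pi.sub_apply]
    ring
  have hmain : S * ∫ y : ℝ, Real.exp (-(b * y^2/2)) * (1 + l * c4 R * y^4 - l^2 * (c3 R)^2/2 * y^6)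
      = 1 + l * c4 R * (3/b^2) - l^2 * (c3 R)^2/2 * (15/b^3) := by
    have : ∀ y : ℝ, Real.exp (-(b * y^2/2)) * (1 + l * c4 R * y^4 - l^2 * (c3 R)^2/2 * y^6)
        = y^0 * Real.exp (-(b * y^2/2)) + (l * c4 R) * (y^4 * Real.exp (-(b * y^2/2))) - (l^2 * (c3 R)^2/2) * (y^6 * Real.exp (-(b * y^2/2))) := by
      intro y; ring
    simp only [this]
    rw [integral_sub ((I 0).fun_add ((I 4).const_mul _)) ((I 6).const_mul _), integral_add (I 0) ((I 4).const_mul _), integral_const_mul, integral_const_mul, ← m4, ← m6, ← m0]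
    ring
  -- the error
  have h0 : Integrable (fun y : ℝ => (1 + (R⁻¹ * y)^2)⁻¹) :=
    ((integrable_inv_one_add_sq).comp_mul_left' (inv_ne_zero hR0.ne'))
  have h0v : ∫ y : ℝ, (1 + (R⁻¹ * y)^2)⁻¹ = π * R := by
    rw [Measure.integral_comp_mul_left (fun y : ℝ => (1 + y^2)⁻¹) R⁻¹, integral_univ_inv_one_add_sq, inv_inv, abs_of_pos hR0, smul_eq_mul, mul_comm]
  set K := Real.exp (-G1 l R) + Real.exp (-G2 l R) with hK
  have eerr : ∀ y : ℝ, Real.exp (-(b * y^2/2)) * (l^3 * c4 R/72 * y^10 + l^4/31104 * y^12 + l * c6 R * y^6 + l^2/600 * y^8)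
     + (l^2 * (c4 R)^2/2 * (y^8 * Real.exp (-(b' * y^2/2))) + K * (1 + (R⁻¹ * y)^2)⁻¹)
     = (l^3 * c4 R/72) * (y^10 * Real.exp (-(b * y^2/2))) + (l^4/31104) * (y^12 * Real.exp (-(b * y^2/2)))
      + (l * c6 R) * (y^6 * Real.exp (-(b * y^2/2))) + (l^2/600) * (y^8 * Real.exp (-(b * y^2/2)))
      + (l^2 * (c4 R)^2/2) * (y^8 * Real.exp (-(b' * y^2/2))) + K * (1 + (R⁻¹ * y)^2)⁻¹ := by
    intro y; ring
  have i1 := (I 10).const_mul (l^3 * c4 R/72)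
  have i2 := (I 12).const_mul (l^4/31104)
  have i3 := (I 6).const_mul (l * c6 R)
  have i4 := (I 8).const_mul (l^2/600)
  have i5 := (I' 8).const_mul (l^2 * (c4 R)^2/2)
  have i6 := h0.const_mul K
  have j2 := i1.fun_add i2
  have j3 := j2.fun_add i3
  have j4 := j3.fun_add i4
  have j5 := j4.fun_add i5
  have j6 := j5.fun_add i6
  have hle : |J - ∫ y : ℝ, Real.exp (-(b * y^2/2)) * (1 + l * c4 R * y^4 - l^2 * (c3 R)^2/2 * y^6)|
      ≤ ∫ y : ℝ, ((l^3 * c4 R/72) * (y^10 * Real.exp (-(b * y^2/2))) + (l^4/31104) * (y^12 * Real.exp (-(b * y^2/2)))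
      + (l * c6 R) * (y^6 * Real.exp (-(b * y^2/2))) + (l^2/600) * (y^8 * Real.exp (-(b * y^2/2)))
      + (l^2 * (c4 R)^2/2) * (y^8 * Real.exp (-(b' * y^2/2))) + K * (1 + (R⁻¹ * y)^2)⁻¹) := by
    rw [hJ, ← integral_sub hint hmainI]
    refine (abs_integral_le_integral_abs).trans ?_
    refine integral_mono (hint.sub hmainI).abs j6 (fun y => ?_)
    have := D_pt hR hl hN y
    rw [eerr y] at this
    exact this
  rw [integral_add j5 i6, integral_add j4 i5, integral_add j3 i4, integral_add j2 i3, integral_add i1 i2] at hle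
  simp only [integral_const_mul] at hle
  rw [h0v] at hle
  have hS' : S = Real.sqrt ((1 + 1/R)/(1 + 1/R - 4 * c4 R)) * Real.sqrt (b' / (2*π)) := by
    rw [hS, ← Real.sqrt_mul (by positivity)]
    congr 1
    have hq : ∀ q q' : ℝ, 0 < q' → l*q/(2*π) = q/q' * (l*q'/(2*π)) := by
      intro q q' hq
      have := Real.pi_pos
      field_simp
    exact hq _ _ ha'
  rw [← hmain, ← mul_sub, abs_mul, abs_of_nonneg hS0]
  refine (mul_le_mul_of_nonneg_left hle hS0).trans (le_of_eq ?_)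
  rw [← m10, ← m12, ← m6, ← m8, ← m8']
  rw [← mul_assoc (Real.sqrt ((1 + 1/R)/(1 + 1/R - 4 * c4 R))), ← hS']
  ring

end PartD

section PartE
open MeasureTheory Filter Topology Set Real

lemma poly_G {h l : ℝ} (hh : 0 ≤ h) (hl : 9.01 * (1 + h + h^2/2) ≤ l) :
    (3*(11/5+h)+2) * (2*(11/5+h)^2 + 9.8596) ≤ (l*(11/5+h) - 2) * 9.8596 ∧
    (3*(11/5+h)+3 - 5*l/6) * ((11/5+h)^2+1) ≤ l*(11/5+h) - 2 ∧
    (11/5+h)^2 + (11/5+h) ≤ l := by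
  have h2 : 0 ≤ h^2 := by positivity
  have h3 : 0 ≤ h^3 := by positivity
  have h4 : 0 ≤ h^4 := by positivity
  refine ⟨?_, ?_, ?_⟩
  · have := mul_le_mul_of_nonneg_right hl (by positivity : 0 ≤ (11/5+h))
    nlinarith
  · have := mul_le_mul_of_nonneg_right hl (by positivity : 0 ≤ (11/5+h) + 5/6*((11/5+h)^2+1))
    nlinarith
  · nlinarith

lemma exp_lo {R : ℝ} (hR : 11/5 ≤ R) : 9.01 * (1 + (R-11/5) + (R-11/5)^2/2) ≤ Real.exp R := by
  have h1 : Real.exp R = Real.exp 1 * Real.exp 1 * Real.exp (1/5) * Real.exp (R - 11/5) := by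
    rw [← Real.exp_add, ← Real.exp_add, ← Real.exp_add]; congr 1; ring
  have h2 := Real.quadratic_le_exp_of_nonneg (by norm_num : (0:ℝ) ≤ 1/5)
  have h3 := Real.quadratic_le_exp_of_nonneg (sub_nonneg.2 hR)
  have h4 := Real.exp_one_gt_d9
  have h5 : (9.01:ℝ) ≤ Real.exp 1 * Real.exp 1 * Real.exp (1/5) := by
    have : (7.3890:ℝ) ≤ Real.exp 1 * Real.exp 1 := by nlinarith
    calc (9.01:ℝ) ≤ 7.3890 * (1 + 1/5 + (1/5)^2/2) := by norm_num
      _ ≤ _ := by gcongr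
  rw [h1]
  have : 0 ≤ R - 11/5 := by linarith
  gcongr

lemma tail_num {R l : ℝ} (hR : 11/5 ≤ R) (hl : l = Real.exp R) :
    (Real.exp (-G1 l R) + Real.exp (-G2 l R)) * (Real.sqrt (l * (1 + 1/R) / (2*π)) * (π * R)) ≤ 0.235 / l^2 := by
  have hR0 : 0 < R := by linarith
  have hl0 : 0 < l := by rw [hl]; positivity
  have hlo := exp_lo hR
  rw [← hl] at hlo
  obtain ⟨p1, p2, p3⟩ := poly_G (sub_nonneg.2 hR) hlo
  rw [show 11/5 + (R - 11/5) = R by ring] at p1 p2 p3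
  have hpi := Real.pi_gt_d2
  have hpi2 := Real.pi_lt_d4
  have hpp : 9.8596 ≤ π^2 := by nlinarith
  have hpos := Real.pi_pos
  have g1 : 3*R+2 ≤ G1 l R := by
    have : G1 l R = (l*R-2)*π^2/(2*R^2+π^2) := by
      unfold G1; field_simp; ring
    rw [this, le_div_iff₀ (by positivity)]
    have : (3*R+2) ≤ l*R-2 := by nlinarith
    nlinarith
  have g2 : 3*R+3 ≤ G2 l R := by
    have : G2 l R = 5*l/6 + (l*R-2)/(R^2+1) := by
      unfold G2; field_simp; ring
    rw [this]
    have : 3*R+3 - 5*l/6 ≤ (l*R-2)/(R^2+1) := by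
      rw [le_div_iff₀ (by positivity)]; exact p2
    linarith
  have hs : Real.sqrt (l * (1 + 1/R) / (2*π)) * (π * R) ≤ 1.2535 * l := by
    have e1 : π * R = Real.sqrt ((π * R)^2) := (Real.sqrt_sq (by positivity)).symm
    have e2 : l * (1 + 1/R) / (2*π) * (π * R)^2 = l * (R^2+R) * π/2 := by field_simp
    rw [e1, ← Real.sqrt_mul (by positivity), e2]
    apply Real.sqrt_le_iff.2 ⟨by positivity, ?_⟩
    have : l * (R^2+R) ≤ l * l := by gcongr
    nlinarith
  have x3 : Real.exp (-(3*R)) = 1/l^3 := by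
    rw [Real.exp_neg, show 3*R = R+R+R by ring, Real.exp_add, Real.exp_add, ← hl]
    field_simp
  have hE := Real.exp_one_gt_d9
  have x1 : Real.exp (-G1 l R) ≤ 1/l^3 * 0.1354 := by
    calc Real.exp (-G1 l R) ≤ Real.exp (-(3*R) + -2) := Real.exp_le_exp.2 (by linarith)
      _ = 1/l^3 * Real.exp (-2) := by rw [Real.exp_add, x3]
      _ ≤ _ := by
        gcongr
        rw [show (-2:ℝ) = -(1+1) by norm_num, Real.exp_neg, Real.exp_add]
        rw [inv_le_comm₀ (by positivity) (by norm_num)]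
        norm_num; nlinarith
  have x2 : Real.exp (-G2 l R) ≤ 1/l^3 * 0.0499 := by
    calc Real.exp (-G2 l R) ≤ Real.exp (-(3*R) + -3) := Real.exp_le_exp.2 (by linarith)
      _ = 1/l^3 * Real.exp (-3) := by rw [Real.exp_add, x3]
      _ ≤ _ := by
        gcongr
        rw [show (-3:ℝ) = -(1+1+1) by norm_num, Real.exp_neg, Real.exp_add, Real.exp_add]
        rw [inv_le_comm₀ (by positivity) (by norm_num)]
        have : 7.389 ≤ rexp 1 * rexp 1 := by nlinarith
        norm_num; nlinarith
  calc _ ≤ (1/l^3 * 0.1354 + 1/l^3 * 0.0499) * (1.2535 * l) := by gcongr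
    _ = (0.1354 + 0.0499) * 1.2535 / l^2 := by field_simp
    _ ≤ _ := by gcongr; norm_num

set_option maxHeartbeats 1000000 in
lemma num_bound {R l : ℝ} (hR : 11/5 ≤ R) (hl : l = Real.exp R) :
    0 < 1 + 1/R - 4 * c4 R ∧
    l^3 * c4 R/72 * (945/(l * (1 + 1/R))^5) + l^4/31104 * (10395/(l * (1 + 1/R))^6)
      + l * c6 R * (15/(l * (1 + 1/R))^3) + l^2/600 * (105/(l * (1 + 1/R))^4)
      + l^2 * (c4 R)^2/2 * (Real.sqrt ((1 + 1/R)/(1 + 1/R - 4 * c4 R)) * (105/(l * (1 + 1/R - 4 * c4 R))^4))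
      + (Real.exp (-G1 l R) + Real.exp (-G2 l R)) * (Real.sqrt (l * (1 + 1/R) / (2*π)) * (π * R)) ≤ 1.6 / l^2 := by
  have hR0 : 0 < R := by linarith
  have hl0 : 0 < l := by rw [hl]; positivity
  have ht := tail_num hR hl
  obtain ⟨u, hu⟩ : ∃ u, u = 1/R := ⟨_, rfl⟩
  have hu0 : 0 < u := by rw [hu]; positivity
  have hu1 : u ≤ 5/11 := by
    rw [hu, div_le_iff₀ hR0]; linarith
  have hu2 : u^2 ≤ 25/121 := by nlinarith
  have hu3 : u^3 ≤ 25/121 * u := by nlinarith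
  have e4 : c4 R = (1+6*u^3)/24 := by rw [c4, ← hu]; ring
  have e6 : c6 R = 1/720 + u^5/6 := by rw [c6, ← hu]
  set t := (Real.exp (-G1 l R) + Real.exp (-G2 l R)) * (Real.sqrt (l * (1 + 1/R) / (2*π)) * (π * R)) with htd
  rw [← hu, e4, e6]
  have ea : 1 + u - 4 * ((1+6*u^3)/24) = 5/6 + u - u^3 := by ring
  rw [ea]
  have ha' : 5/6 ≤ 5/6 + u - u^3 := by nlinarith
  have ha0 : 0 < 5/6 + u - u^3 := by linarith
  refine ⟨ha0, ?_⟩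
  have hu30 : 0 < u^3 := by positivity
  have t2 : l^3 * ((1+6*u^3)/24)/72 * (945/(l * (1 + u))^5) ≤ 0.547 / l^2 := by
    have : l^3 * ((1+6*u^3)/24)/72 * (945/(l * (1 + u))^5) = (945/1728) * ((1+6*u^3)/(1+u)^5) / l^2 := by
      field_simp; ring
    rw [this]
    have : (1+6*u^3)/(1+u)^5 ≤ 1 := by
      rw [div_le_one (by positivity)]
      have : (1+u)^5 = 1+5*u+10*u^2+10*u^3+5*u^4+u^5 := by ring
      rw [this]
      have : 0 < u^4 := by positivity
      have : 0 < u^5 := by positivity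
      nlinarith
    gcongr
    linarith
  have t3 : l^4/31104 * (10395/(l * (1 + u))^6) ≤ 0.335 / l^2 := by
    have : l^4/31104 * (10395/(l * (1 + u))^6) = (10395/31104) * (1/(1+u)^6) / l^2 := by
      field_simp
    rw [this]
    have : 1/(1+u)^6 ≤ 1 := by
      rw [div_le_one (by positivity)]
      exact one_le_pow₀ (by linarith)
    gcongr
    linarith
  have t4 : l * (1/720 + u^5/6) * (15/(l * (1 + u))^3) ≤ 0.03 / l^2 := by
    have : l * (1/720 + u^5/6) * (15/(l * (1 + u))^3) = (15*(1/720 + u^5/6))/(1+u)^3 / l^2 := by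
      field_simp
    rw [this]
    gcongr
    rw [div_le_iff₀ (by positivity)]
    have : u^5 ≤ 25/121 * (25/121 * u) := by
      calc u^5 = u^2 * u^3 := by ring
        _ ≤ _ := by gcongr
    have : u^5 ≤ 0.094 * u^2 := by
      have : u^5 = u^3 * u^2 := by ring
      rw [this]; gcongr; nlinarith
    nlinarith
  have t5 : l^2/600 * (105/(l * (1 + u))^4) ≤ 0.175 / l^2 := by
    have : l^2/600 * (105/(l * (1 + u))^4) = (105/600) * (1/(1+u)^4) / l^2 := by
      field_simp
    rw [this]
    have : 1/(1+u)^4 ≤ 1 := by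
      rw [div_le_one (by positivity)]
      exact one_le_pow₀ (by linarith)
    gcongr
    linarith
  have t1 : l^2 * ((1+6*u^3)/24)^2/2 * (Real.sqrt ((1 + u)/(5/6 + u - u^3)) * (105/(l * (5/6 + u - u^3))^4)) ≤ 0.216 / l^2 := by
    have e : l^2 * ((1+6*u^3)/24)^2/2 * (Real.sqrt ((1 + u)/(5/6 + u - u^3)) * (105/(l * (5/6 + u - u^3))^4))
       = (105/1152) * (Real.sqrt ((1 + u)/(5/6 + u - u^3)) * ((1+6*u^3)/(5/6 + u - u^3)^2)^2) / l^2 := by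
      generalize 5/6 + u - u^3 = v at *
      field_simp; ring
    rw [e]
    have s1 : Real.sqrt ((1 + u)/(5/6 + u - u^3)) ≤ 1.119 := by
      apply Real.sqrt_le_iff.2 ⟨by norm_num, ?_⟩
      rw [div_le_iff₀ ha0]
      nlinarith
    have s2 : (1+6*u^3)/(5/6 + u - u^3)^2 ≤ 1.449 := by
      rw [div_le_iff₀ (by positivity)]
      have : (5/6 + u - u^3)^2 ≥ 25/36 + 5/3*(u-u^3) := by nlinarith only [sq_nonneg (u-u^3)]
      linarith only [this, hu3, hu0]
    have s3 : 0 ≤ (1+6*u^3)/(5/6 + u - u^3)^2 := by positivity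
    calc _ ≤ (105/1152) * (1.119 * 1.449^2) / l^2 := by gcongr
      _ ≤ _ := by gcongr; norm_num
  have : (1.6:ℝ)/l^2 ≥ 0.547/l^2 + 0.335/l^2 + 0.03/l^2 + 0.175/l^2 + 0.216/l^2+0.235/l^2 := by
    rw [← add_div, ← add_div, ← add_div, ← add_div, ← add_div]
    gcongr; norm_num
  linarith

lemma main_eq {R l : ℝ} (hR : 0 < R) (hl : l = Real.exp R) :
   1 + l * c4 R * (3/(l * (1 + 1/R))^2) - l^2 * (c3 R)^2/2 * (15/(l * (1 + 1/R))^3)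
   = 1 - (Real.exp (-R) / 12) *
          ((1 - 3 / (2 * R) - 10 / R ^ 2 - 9 / R ^ 3 + 1 / R ^ 4) / (1 + 1 / R) ^ 3) := by
  have hl0 : 0 < l := by rw [hl]; positivity
  rw [Real.exp_neg, ← hl]
  unfold c4 c3
  have e1 : 1 + 1/R = (R+1)/R := by field_simp
  rw [e1]
  field_simp
  ring

lemma big_case {R : ℝ} (hR : 11/5 ≤ R) {n : ℕ} (hn : 1 ≤ n) (hN : Real.exp R * R = n + 1)
    (hW : R = lambertW (n+1)) : 
    |(Bell n : ℝ) / E n -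
        (1 - (Real.exp (-R) / 12) *
          ((1 - 3 / (2 * R) - 10 / R ^ 2 - 9 / R ^ 3 + 1 / R ^ 4) / (1 + 1 / R) ^ 3))| ≤
      1.6 * Real.exp (-2 * R) := by
  have hR0 : 0 < R := by linarith
  obtain ⟨hi, he⟩ := bell_rep hR0 hn hN hW
  obtain ⟨ha, hb⟩ := num_bound hR rfl
  have h2 : 2 ≤ Real.exp R * R := by
    rw [hN]; have : (1:ℝ) ≤ n := by exact_mod_cast hn
    linarith
  have := main_bound hR (Real.exp_pos R) h2 ha hi
  rw [he, ← main_eq hR0 rfl]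
  refine (this.trans hb).trans (le_of_eq ?_)
  rw [show -2*R = -(R+R) by ring, Real.exp_neg, Real.exp_add]
  field_simp
end PartE

section PartF
open Real

lemma W_eq {x : ℝ} (hx : 0 < x) : lambertW x * Real.exp (lambertW x) = x := by
  have hex : ∃ y : ℝ, (fun y : ℝ => y * Real.exp y) y = x := by
    have hc : ContinuousOn (fun y : ℝ => y * Real.exp y) (Set.Icc 0 x) := by fun_prop
    have := intermediate_value_Icc hx.le hc
    have hm : x ∈ Set.Icc ((fun y : ℝ => y * Real.exp y) 0) ((fun y : ℝ => y * Real.exp y) x) := by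
      refine ⟨by simpa using hx.le, ?_⟩
      have := Real.one_le_exp hx.le
      simp only
      nlinarith
    obtain ⟨y, -, hy⟩ := this hm
    exact ⟨y, hy⟩
  exact Function.invFun_eq hex

lemma W_pos {x : ℝ} (hx : 0 < x) : 0 < lambertW x := by
  have h := W_eq hx
  by_contra hc
  have := mul_nonpos_of_nonpos_of_nonneg (not_lt.1 hc) (Real.exp_pos (lambertW x)).le
  linarith

lemma le_of_mulexp {a b : ℝ} (hb : 0 < b) (h : a * Real.exp a ≤ b * Real.exp b) : a ≤ b := by
  by_contra hc
  push Not at hc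
  have : b * Real.exp b < a * Real.exp a := by
    have := Real.exp_lt_exp.2 hc
    have := Real.exp_pos b
    nlinarith
  linarith

noncomputable def tpL (y : ℝ) : ℝ := 1 + y + y^2/2 + y^3/6 + y^4/24 + y^5/120 + y^6/720 + y^7/5040
noncomputable def tpU (y : ℝ) : ℝ := tpL y + y^8*9/(40320*8)

lemma tpL_le {x : ℝ} (hx : 0 ≤ x) : tpL (x/16) ^ 16 ≤ Real.exp x := by
  have h0 : 0 ≤ x/16 := by positivity
  have := Real.sum_le_exp_of_nonneg h0 8
  have e : Real.exp x = Real.exp (x/16) ^ 16 := by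
    rw [← Real.exp_nat_mul]; congr 1; push_cast; ring
  rw [e]
  have h1 : 0 ≤ tpL (x/16) := by unfold tpL; positivity
  gcongr
  refine le_trans (le_of_eq ?_) this
  simp [tpL, Finset.sum_range_succ, Nat.factorial]

lemma le_tpU {x : ℝ} (hx : 0 ≤ x) (hx' : x ≤ 16) : Real.exp x ≤ tpU (x/16) ^ 16 := by
  have h0 : 0 ≤ x/16 := by positivity
  have := Real.exp_bound' h0 (by linarith : x/16 ≤ 1) (n := 8) (by norm_num)
  have e : Real.exp x = Real.exp (x/16) ^ 16 := by
    rw [← Real.exp_nat_mul]; congr 1; push_cast; ring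
  rw [e]
  gcongr
  refine le_trans this (le_of_eq ?_)
  simp [tpU, tpL, Finset.sum_range_succ, Nat.factorial]
  norm_num

lemma small_case {n B : ℕ} (lo hi s1 s2 F1 F2 : ℝ) (hB : Bell n = B)
    (h0 : 0 < lo ∧ lo ≤ hi ∧ hi ≤ 16 ∧ 0 < s1 ∧ 0 < s2 ∧ 0 < F1 ∧ 0 < F2 ∧ hi ≤ n+1)
    (h1 : ((n:ℝ)+1)/lo - 1 ≤ 16)
    (c1 : lo * tpU (lo/16)^16 ≤ n+1) (c2 : n+1 ≤ hi * tpL (hi/16)^16)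
    (c3 : s1^2 ≤ 2*3.1415*(n+1)*(lo+1)) (c4 : 2*3.1416*(n+1)*(hi+1) ≤ s2^2)
    (c5 : F1 ≤ tpL ((((n:ℝ)+1)/hi-1)/16)^16) (c6 : tpU ((((n:ℝ)+1)/lo-1)/16)^16 ≤ F2)
    (c7 : 0 ≤ 3/2*lo^3+10*lo^2+9*lo-1-hi^4)
    (c8 : B*hi^n*s2/(n.factorial * F1) - (1 + (3/2*lo^3+10*lo^2+9*lo-1-hi^4)/(12*(n+1)*(hi+1)^3)) ≤ 1.6 * (lo/(n+1))^2)
    (c9 : 1 + (3/2*hi^3+10*hi^2+9*hi-1-lo^4)/(12*(n+1)*(lo+1)^3) - B*lo^n*s1/(n.factorial * F2) ≤ 1.6 * (lo/(n+1))^2)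
    {R : ℝ} (hR : R = lambertW (n + 1)) :
    |(Bell n : ℝ) / E n -
        (1 - (Real.exp (-R) / 12) *
          ((1 - 3 / (2 * R) - 10 / R ^ 2 - 9 / R ^ 3 + 1 / R ^ 4) / (1 + 1 / R) ^ 3))| ≤
      1.6 * Real.exp (-2 * R) := by
  obtain ⟨hlo, hlh, hi16, hs1, hs2, hF1, hF2, hiN⟩ := h0
  have hhi : 0 < hi := by linarith
  have hNp : (0:ℝ) < (n:ℝ)+1 := by positivity
  have hW := W_eq hNp
  have hR0 := W_pos hNp
  rw [← hR] at hW hR0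
  have r1 : lo ≤ R := by
    apply le_of_mulexp hR0
    rw [hW]
    refine le_trans ?_ c1
    gcongr
    exact le_tpU hlo.le (by linarith)
  have r2 : R ≤ hi := by
    apply le_of_mulexp hhi
    rw [hW]
    refine c2.trans ?_
    gcongr
    exact tpL_le hhi.le
  have eR : Real.exp R = (n+1)/R := by field_simp; linarith
  have eR' : Real.exp (-R) = R/(n+1) := by rw [Real.exp_neg, eR, inv_div]
  have eR2 : Real.exp (-2*R) = (R/(n+1))^2 := by
    rw [← eR', ← Real.exp_nat_mul]; congr 1; push_cast; ring
  have hX : (Bell n : ℝ) / E n = B * R^n * Real.sqrt (2*π*(n+1)*(R+1)) / (n.factorial * Real.exp ((n+1)/R-1)) := by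
    unfold E
    rw [← hR, hB, eR]
    field_simp
  have hA : (1 - (Real.exp (-R) / 12) *
          ((1 - 3 / (2 * R) - 10 / R ^ 2 - 9 / R ^ 3 + 1 / R ^ 4) / (1 + 1 / R) ^ 3))
      = 1 + (3/2*R^3+10*R^2+9*R-1-R^4)/(12*(n+1)*(R+1)^3) := by
    rw [eR', show 1 + 1/R = (R+1)/R by field_simp]
    field_simp
    ring
  rw [hX, hA, eR2]
  have p1 := Real.pi_gt_d4
  have p2 := Real.pi_lt_d4
  have q1 : s1 ≤ Real.sqrt (2*π*(n+1)*(R+1)) := by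
    apply Real.le_sqrt_of_sq_le
    refine c3.trans ?_
    gcongr
  have q2 : Real.sqrt (2*π*(n+1)*(R+1)) ≤ s2 := by
    apply Real.sqrt_le_iff.2 ⟨hs2.le, ?_⟩
    refine le_trans ?_ c4
    gcongr
  have w1 : F1 ≤ Real.exp ((n+1)/R-1) := by
    refine (c5.trans (tpL_le ?_)).trans ?_
    · rw [sub_nonneg, le_div_iff₀ hhi]; linarith
    · gcongr
  have w2 : Real.exp ((n+1)/R-1) ≤ F2 := by
    refine le_trans ?_ ((le_tpU ?_ h1).trans c6)
    · gcongr
    · rw [sub_nonneg, le_div_iff₀ hlo]; linarith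
  have X1 : B*lo^n*s1/(n.factorial * F2) ≤ B * R^n * Real.sqrt (2*π*(n+1)*(R+1)) / (n.factorial * Real.exp ((n+1)/R-1)) := by
    gcongr
  have X2 : B * R^n * Real.sqrt (2*π*(n+1)*(R+1)) / (n.factorial * Real.exp ((n+1)/R-1)) ≤ B*hi^n*s2/(n.factorial * F1) := by
    gcongr
  have Q1 : 3/2*lo^3+10*lo^2+9*lo-1-hi^4 ≤ 3/2*R^3+10*R^2+9*R-1-R^4 := by gcongr
  have Q2 : 3/2*R^3+10*R^2+9*R-1-R^4 ≤ 3/2*hi^3+10*hi^2+9*hi-1-lo^4 := by gcongr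
  have A1 : (3/2*lo^3+10*lo^2+9*lo-1-hi^4)/(12*(n+1)*(hi+1)^3) ≤ (3/2*R^3+10*R^2+9*R-1-R^4)/(12*(n+1)*(R+1)^3) := by
    have := c7.trans Q1
    gcongr
  have A2 : (3/2*R^3+10*R^2+9*R-1-R^4)/(12*(n+1)*(R+1)^3) ≤ (3/2*hi^3+10*hi^2+9*hi-1-lo^4)/(12*(n+1)*(lo+1)^3) := by
    have := (c7.trans Q1).trans Q2
    gcongr
  have T : 1.6 * (lo/(n+1))^2 ≤ 1.6 * (R/(n+1))^2 := by gcongr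
  rw [abs_le]
  constructor <;> linarith

lemma bells_aux (f : ℕ → ℕ) (b0 : f 0 = 1) (hf : ∀ m, f (m+1) = ∑ j ∈ Finset.range (m + 1), m.choose j * f j) :
   f 1 = 1 ∧ f 2 = 2 ∧ f 3 = 5 ∧ f 4 = 15 ∧ f 5 = 52 ∧ f 6 = 203 ∧ f 7 = 877 ∧ f 8 = 4140 ∧ f 9 = 21147 ∧ f 10 = 115975 ∧ f 11 = 678570 ∧ f 12 = 4213597 ∧ f 13 = 27644437 ∧ f 14 = 190899322 ∧ f 15 = 1382958545 ∧ f 16 = 10480142147 ∧ f 17 = 82864869804 ∧ f 18 = 682076806159 := by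
  have b1 : f 1 = 1 := by
    rw [hf]; simp only [Finset.sum_range_succ, Finset.sum_range_zero, b0]; norm_num [Nat.choose_eq_descFactorial_div_factorial]
  have b2 : f 2 = 2 := by
    rw [hf]; simp only [Finset.sum_range_succ, Finset.sum_range_zero, b0, b1]; norm_num [Nat.choose_eq_descFactorial_div_factorial]
  have b3 : f 3 = 5 := by
    rw [hf]; simp only [Finset.sum_range_succ, Finset.sum_range_zero, b0, b1, b2]; norm_num [Nat.choose_eq_descFactorial_div_factorial]
  have b4 : f 4 = 15 := by
    rw [hf]; simp only [Finset.sum_range_succ, Finset.sum_range_zero, b0, b1, b2, b3]; norm_num [Nat.choose_eq_descFactorial_div_factorial]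
  have b5 : f 5 = 52 := by
    rw [hf]; simp only [Finset.sum_range_succ, Finset.sum_range_zero, b0, b1, b2, b3, b4]; norm_num [Nat.choose_eq_descFactorial_div_factorial]
  have b6 : f 6 = 203 := by
    rw [hf]; simp only [Finset.sum_range_succ, Finset.sum_range_zero, b0, b1, b2, b3, b4, b5]; norm_num [Nat.choose_eq_descFactorial_div_factorial]
  have b7 : f 7 = 877 := by
    rw [hf]; simp only [Finset.sum_range_succ, Finset.sum_range_zero, b0, b1, b2, b3, b4, b5, b6]; norm_num [Nat.choose_eq_descFactorial_div_factorial]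
  have b8 : f 8 = 4140 := by
    rw [hf]; simp only [Finset.sum_range_succ, Finset.sum_range_zero, b0, b1, b2, b3, b4, b5, b6, b7]; norm_num [Nat.choose_eq_descFactorial_div_factorial]
  have b9 : f 9 = 21147 := by
    rw [hf]; simp only [Finset.sum_range_succ, Finset.sum_range_zero, b0, b1, b2, b3, b4, b5, b6, b7, b8]; norm_num [Nat.choose_eq_descFactorial_div_factorial]
  have b10 : f 10 = 115975 := by
    rw [hf]; simp only [Finset.sum_range_succ, Finset.sum_range_zero, b0, b1, b2, b3, b4, b5, b6, b7, b8, b9]; norm_num [Nat.choose_eq_descFactorial_div_factorial]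
  have b11 : f 11 = 678570 := by
    rw [hf]; simp only [Finset.sum_range_succ, Finset.sum_range_zero, b0, b1, b2, b3, b4, b5, b6, b7, b8, b9, b10]; norm_num [Nat.choose_eq_descFactorial_div_factorial]
  have b12 : f 12 = 4213597 := by
    rw [hf]; simp only [Finset.sum_range_succ, Finset.sum_range_zero, b0, b1, b2, b3, b4, b5, b6, b7, b8, b9, b10, b11]; norm_num [Nat.choose_eq_descFactorial_div_factorial]
  have b13 : f 13 = 27644437 := by
    rw [hf]; simp only [Finset.sum_range_succ, Finset.sum_range_zero, b0, b1, b2, b3, b4, b5, b6, b7, b8, b9, b10, b11, b12]; norm_num [Nat.choose_eq_descFactorial_div_factorial]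
  have b14 : f 14 = 190899322 := by
    rw [hf]; simp only [Finset.sum_range_succ, Finset.sum_range_zero, b0, b1, b2, b3, b4, b5, b6, b7, b8, b9, b10, b11, b12, b13]; norm_num [Nat.choose_eq_descFactorial_div_factorial]
  have b15 : f 15 = 1382958545 := by
    rw [hf]; simp only [Finset.sum_range_succ, Finset.sum_range_zero, b0, b1, b2, b3, b4, b5, b6, b7, b8, b9, b10, b11, b12, b13, b14]; norm_num [Nat.choose_eq_descFactorial_div_factorial]
  have b16 : f 16 = 10480142147 := by
    rw [hf]; simp only [Finset.sum_range_succ, Finset.sum_range_zero, b0, b1, b2, b3, b4, b5, b6, b7, b8, b9, b10, b11, b12, b13, b14, b15]; norm_num [Nat.choose_eq_descFactorial_div_factorial]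
  have b17 : f 17 = 82864869804 := by
    rw [hf]; simp only [Finset.sum_range_succ, Finset.sum_range_zero, b0, b1, b2, b3, b4, b5, b6, b7, b8, b9, b10, b11, b12, b13, b14, b15, b16]; norm_num [Nat.choose_eq_descFactorial_div_factorial]
  have b18 : f 18 = 682076806159 := by
    rw [hf]; simp only [Finset.sum_range_succ, Finset.sum_range_zero, b0, b1, b2, b3, b4, b5, b6, b7, b8, b9, b10, b11, b12, b13, b14, b15, b16, b17]; norm_num [Nat.choose_eq_descFactorial_div_factorial]
  exact ⟨b1, b2, b3, b4, b5, b6, b7, b8, b9, b10, b11, b12, b13, b14, b15, b16, b17, b18⟩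

lemma bells : Bell 1 = 1 ∧ Bell 2 = 2 ∧ Bell 3 = 5 ∧ Bell 4 = 15 ∧ Bell 5 = 52 ∧ Bell 6 = 203 ∧ Bell 7 = 877 ∧ Bell 8 = 4140 ∧ Bell 9 = 21147 ∧ Bell 10 = 115975 ∧ Bell 11 = 678570 ∧ Bell 12 = 4213597 ∧ Bell 13 = 27644437 ∧ Bell 14 = 190899322 ∧ Bell 15 = 1382958545 ∧ Bell 16 = 10480142147 ∧ Bell 17 = 82864869804 ∧ Bell 18 = 682076806159 :=
  bells_aux Bell (by simp [Bell]) Bell_succ'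

lemma small_all {n : ℕ} (hn : 1 ≤ n) (hn' : n ≤ 18) {R : ℝ} (hR : R = lambertW (n + 1)) :
    |(Bell n : ℝ) / E n -
        (1 - (Real.exp (-R) / 12) *
          ((1 - 3 / (2 * R) - 10 / R ^ 2 - 9 / R ^ 3 + 1 / R ^ 4) / (1 + 1 / R) ^ 3))| ≤
      1.6 * Real.exp (-2 * R) := by
  obtain ⟨b1, b2, b3, b4, b5, b6, b7, b8, b9, b10, b11, b12, b13, b14, b15, b16, b17, b18⟩ := bells
  interval_cases n
  · refine small_case (n := 1) (B := 1) (341/400) (8527/10000) (48247/10000) (12063/2500) (384007/100000) (384219/100000) b1 ?_ ?_ ?_ ?_ ?_ ?_ ?_ ?_ ?_ ?_ ?_ hR <;> norm_num [tpL, tpU, Nat.factorial]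
  · refine small_case (n := 2) (B := 2) (5249/5000) (21/20) (31079/5000) (62163/10000) (32027/5000) (64089/10000) b2 ?_ ?_ ?_ ?_ ?_ ?_ ?_ ?_ ?_ ?_ ?_ hR <;> norm_num [tpL, tpU, Nat.factorial]
  · refine small_case (n := 3) (B := 5) (12021/10000) (6011/5000) (9299/1250) (18599/2500) (512477/50000) (1025239/100000) b3 ?_ ?_ ?_ ?_ ?_ ?_ ?_ ?_ ?_ ?_ ?_ hR <;> norm_num [tpL, tpU, Nat.factorial]
  · refine small_case (n := 4) (B := 15) (13267/10000) (3317/2500) (42747/5000) (42749/5000) (199177/12500) (159387/10000) b4 ?_ ?_ ?_ ?_ ?_ ?_ ?_ ?_ ?_ ?_ ?_ hR <;> norm_num [tpL, tpU, Nat.factorial]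
  · refine small_case (n := 5) (B := 52) (14323/10000) (573/400) (23939/2500) (47881/5000) (2425157/100000) (2426577/100000) b5 ?_ ?_ ?_ ?_ ?_ ?_ ?_ ?_ ?_ ?_ ?_ hR <;> norm_num [tpL, tpU, Nat.factorial]
  · refine small_case (n := 6) (B := 203) (15243/10000) (3811/2500) (52683/5000) (105371/10000) (1815277/50000) (3631649/100000) b6 ?_ ?_ ?_ ?_ ?_ ?_ ?_ ?_ ?_ ?_ ?_ hR <;> norm_num [tpL, tpU, Nat.factorial]
  · refine small_case (n := 7) (B := 877) (16057/10000) (16059/10000) (114443/10000) (2289/200) (1072087/20000) (5363763/100000) b7 ?_ ?_ ?_ ?_ ?_ ?_ ?_ ?_ ?_ ?_ ?_ hR <;> norm_num [tpL, tpU, Nat.factorial]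
  · refine small_case (n := 8) (B := 4140) (16789/10000) (16791/10000) (61539/5000) (61543/5000) (313033/4000) (978853/12500) b8 ?_ ?_ ?_ ?_ ?_ ?_ ?_ ?_ ?_ ?_ ?_ hR <;> norm_num [tpL, tpU, Nat.factorial]
  · refine small_case (n := 9) (B := 21147) (3491/2000) (1091/625) (131339/10000) (8209/625) (2262943/20000) (11318431/100000) b9 ?_ ?_ ?_ ?_ ?_ ?_ ?_ ?_ ?_ ?_ ?_ hR <;> norm_num [tpL, tpU, Nat.factorial]
  · refine small_case (n := 10) (B := 115975) (1129/625) (9033/5000) (139269/10000) (139277/10000) (4054819/25000) (3246043/20000) b10 ?_ ?_ ?_ ?_ ?_ ?_ ?_ ?_ ?_ ?_ ?_ hR <;> norm_num [tpL, tpU, Nat.factorial]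
  · refine small_case (n := 11) (B := 678570) (18627/10000) (18629/10000) (146913/10000) (73461/5000) (4616083/20000) (11548193/50000) b11 ?_ ?_ ?_ ?_ ?_ ?_ ?_ ?_ ?_ ?_ ?_ hR <;> norm_num [tpL, tpU, Nat.factorial]
  · refine small_case (n := 12) (B := 4213597) (19151/10000) (1197/625) (30861/2000) (154311/10000) (4078691/12500) (32641099/100000) b12 ?_ ?_ ?_ ?_ ?_ ?_ ?_ ?_ ?_ ?_ ?_ hR <;> norm_num [tpL, tpU, Nat.factorial]
  · refine small_case (n := 13) (B := 27644437) (491/250) (19641/10000) (40367/2500) (80737/5000) (5731171/12500) (22933009/50000) b13 ?_ ?_ ?_ ?_ ?_ ?_ ?_ ?_ ?_ ?_ ?_ hR <;> norm_num [tpL, tpU, Nat.factorial]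
  · refine small_case (n := 14) (B := 190899322) (20099/10000) (201/100) (21053/1250) (16843/1000) (64078011/100000) (32050911/50000) b14 ?_ ?_ ?_ ?_ ?_ ?_ ?_ ?_ ?_ ?_ ?_ hR <;> norm_num [tpL, tpU, Nat.factorial]
  · refine small_case (n := 15) (B := 1382958545) (20531/10000) (20533/10000) (175191/10000) (175201/10000) (89099071/100000) (44583379/50000) b15 ?_ ?_ ?_ ?_ ?_ ?_ ?_ ?_ ?_ ?_ ?_ hR <;> norm_num [tpL, tpU, Nat.factorial]
  · refine small_case (n := 16) (B := 10480142147) (1047/500) (10471/5000) (181789/10000) (90899/5000) (123355791/100000) (30862881/25000) b16 ?_ ?_ ?_ ?_ ?_ ?_ ?_ ?_ ?_ ?_ ?_ hR <;> norm_num [tpL, tpU, Nat.factorial]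
  · refine small_case (n := 17) (B := 82864869804) (1333/625) (2133/1000) (47057/2500) (94119/5000) (85036937/50000) (85104309/50000) b17 ?_ ?_ ?_ ?_ ?_ ?_ ?_ ?_ ?_ ?_ ?_ hR <;> norm_num [tpL, tpU, Nat.factorial]
  · refine small_case (n := 18) (B := 682076806159) (21697/10000) (21699/10000) (97261/5000) (48633/2500) (46718493/20000) (116890639/50000) b18 ?_ ?_ ?_ ?_ ?_ ?_ ?_ ?_ ?_ ?_ ?_ hR <;> norm_num [tpL, tpU, Nat.factorial]

end PartF

theorem stmt_0 (n : ℕ) (hn : 1 ≤ n) (R : ℝ) (hR : R = lambertW (n + 1)) :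
    |(Bell n : ℝ) / E n -
        (1 - (Real.exp (-R) / 12) *
          ((1 - 3 / (2 * R) - 10 / R ^ 2 - 9 / R ^ 3 + 1 / R ^ 4) / (1 + 1 / R) ^ 3))| ≤
      1.6 * Real.exp (-2 * R) := by
  rcases Nat.lt_or_ge 18 n with h | h
  · have hNp : (0:ℝ) < (n:ℝ)+1 := by positivity
    have hW := W_eq hNp
    have hR0 := W_pos hNp
    rw [← hR] at hW hR0
    have h19 : (19:ℝ) ≤ n := by exact_mod_cast h
    have r1 : 11/5 ≤ R := by
      apply le_of_mulexp hR0
      rw [hW]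
      have h1 := le_tpU (x := 11/5) (by norm_num) (by norm_num)
      have h2 : 11/5 * tpU (11/5/16) ^ 16 ≤ 20 := by norm_num [tpU, tpL]
      linarith
    exact big_case r1 hn (by rw [mul_comm]; exact hW) hR
  · exact small_all hn h hR
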